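/- arXiv:0805.0814 — 4 statements merged into one kernel-verified Lean document; each statement's English description precedes it below -/
import Mathlib

section
/- Let d ≥ 4 be even. There exists a constant C = C(d) > 0 such that for every finite field F_q with q elements of characteristic greater than two and every subset E of the paraboloid S ⊂ F_q^d, the number Λ_4(E) of additive quadruples in E satisfies Λ_4(E) ≤ C q^{(d−2)/d} |E|^{(3d−2)/d}. -/
open Finset

noncomputable section

/-- The dot product on `F^n`. -/
def dotp {F : Type} [CommRing F] {n : ℕ} (x y : Fin n → F) : F := ∑ i, x i * y i

/-- The paraboloid `S = {(x̄, x_d) : x_d = x̄ ⬝ x̄}` in `F^d = F^{d-1} × F`. -/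
def parab (F : Type) [CommRing F] [Fintype F] [DecidableEq F] (d : ℕ) :
    Finset ((Fin (d - 1) → F) × F) :=
  Finset.univ.filter fun x => x.2 = dotp x.1 x.1

/-- `Λ₄(E)`: the number of additive quadruples `(x,y,z,w) ∈ E⁴` with `x + y = z + w`. -/
def lambda4 {F : Type} [CommRing F] [Fintype F] [DecidableEq F] {d : ℕ}
    (E : Finset ((Fin (d - 1) → F) × F)) : ℕ :=
  ((E ×ˢ E ×ˢ E ×ˢ E).filter fun t => t.1 + t.2.1 = t.2.2.1 + t.2.2.2).card

/-!
Given `s = x + y`, a point `z` of the paraboloid `S` completes an additive quadruple only if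
`s - z ∈ S`, which is a quadratic equation in `z̄`. Thus `Λ₄(E)` is at most the number of triples
`(x, y, z) ∈ E³` solving it, whose expected value is `|E|³ / q`. The error is controlled by
Cauchy–Schwarz over `z` and the correlations of these quadratic equations for pairs `s`, `s'`.
Multiplying two balanced indicators gives a sum over the pencil `Q_s - r Q_{s'}`, `r ≠ 0`. For
`r ≠ 1` each member is a nondegenerate quadratic polynomial in `d - 1` variables, whose zeros are
counted with square-root cancellation because `d - 1` is odd; for `r = 1` it is affine and
contributes only when `s = s'`, which is the event counted by `Λ₄(E)`. The resulting quadratic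
inequality for `Λ₄(E)` is then combined with the trivial bound `Λ₄(E) ≤ |E|³`.
-/

section BalancedDelta

variable {F : Type*} [Field F] [Fintype F] [DecidableEq F]

/-- The mean-zero point mass `q · 1_{x = 0} - 1` on a field with `q` elements. In Fourier terms
it is `∑_{t ≠ 0} ψ (t x)` for any nontrivial additive character `ψ`. -/
def balancedDelta (x : F) : ℤ := (if x = 0 then (Fintype.card F : ℤ) else 0) - 1

lemma balancedDelta_zero : balancedDelta (0 : F) = Fintype.card F - 1 := by
  simp only [balancedDelta, if_true]

lemma balancedDelta_of_ne_zero {x : F} (hx : x ≠ 0) : balancedDelta x = -1 := by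
  simp only [balancedDelta, if_neg hx, zero_sub]

lemma balancedDelta_mul_left {u : F} (hu : u ≠ 0) (x : F) :
    balancedDelta (u * x) = balancedDelta x := by
  simp only [balancedDelta, mul_eq_zero, hu, false_or]

lemma sum_balancedDelta_add_mul (a : F) {b : F} (hb : b ≠ 0) :
    ∑ t : F, balancedDelta (a + t * b) = 0 := by
  have hbij : Function.Bijective fun t : F => a + t * b :=
    (Equiv.addLeft a).bijective.comp (Equiv.mulRight₀ b hb).bijective
  rw [hbij.sum_comp balancedDelta]
  simp only [balancedDelta, sum_sub_distrib, sum_ite_eq', mem_univ, if_true, sum_const,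
    card_univ, nsmul_eq_mul, mul_one, sub_self]

-- The product formula is multiplication of the two character sums, regrouped by the ratio `r`.
lemma balancedDelta_mul_balancedDelta (a b : F) :
    balancedDelta a * balancedDelta b = ∑ r ∈ univ.erase 0, balancedDelta (a - r * b) := by
  rcases eq_or_ne b 0 with rfl | hb
  · simp only [mul_zero, sub_zero, sum_const, card_erase_of_mem (mem_univ (0 : F)), card_univ,
      nsmul_eq_mul, Nat.cast_pred Fintype.card_pos, balancedDelta_zero, mul_comm]
  · have hsum := sum_balancedDelta_add_mul a (neg_ne_zero.2 hb)
    simp only [mul_neg, ← sub_eq_add_neg] at hsum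
    rw [← add_sum_erase _ _ (mem_univ 0), zero_mul, sub_zero] at hsum
    rw [balancedDelta_of_ne_zero hb]
    linarith

lemma sum_balancedDelta_add_dotProduct {ι : Type*} [Fintype ι] [DecidableEq ι] (e : F)
    {b : ι → F} (hb : b ≠ 0) : ∑ z, balancedDelta (e + z ⬝ᵥ b) = 0 := by
  obtain ⟨i, hi⟩ := Function.ne_iff.1 hb
  have hshift (t : F) : ∑ z, balancedDelta (e + z ⬝ᵥ b) =
      ∑ z, balancedDelta (e + z ⬝ᵥ b + t * b i) := by
    rw [← Equiv.sum_comp (Equiv.addRight (Pi.single i t))]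
    simp only [Equiv.coe_addRight, add_dotProduct, single_dotProduct, add_assoc]
  have haverage : (Fintype.card F : ℤ) * ∑ z, balancedDelta (e + z ⬝ᵥ b) = 0 := by
    calc
      _ = ∑ t : F, ∑ z, balancedDelta (e + z ⬝ᵥ b + t * b i) := by
        simp only [← hshift, sum_const, card_univ, nsmul_eq_mul]
      _ = 0 := by
        rw [sum_comm]
        exact sum_eq_zero fun z _ => sum_balancedDelta_add_mul _ hi
  exact (mul_eq_zero.1 haverage).resolve_left (Nat.cast_ne_zero.2 Fintype.card_ne_zero)

end BalancedDelta

section QuadraticSums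

lemma sum_sub_dotProduct_self_succ {R M : Type*} [CommRing R] [Fintype R]
    [AddCommMonoid M] {n : ℕ} (g : R → M) (a : R) :
    ∑ z : Fin (n + 1) → R, g (a - z ⬝ᵥ z) =
      ∑ x, ∑ z : Fin n → R, g (a - x ^ 2 - z ⬝ᵥ z) := by
  rw [← Fintype.sum_prod_type', ← Equiv.sum_comp (Fin.consEquiv fun _ => R)]
  simp only [Fin.consEquiv, Equiv.coe_fn_mk, dotProduct, Fin.sum_univ_succ, Fin.cons_zero,
    Fin.cons_succ, sub_sub, sq]

variable {F : Type*} [Field F] [Fintype F] [DecidableEq F]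

lemma sum_comp_sq (hF : ringChar F ≠ 2) (g : F → ℤ) :
    ∑ x, g (x ^ 2) = ∑ c, (quadraticChar F c + 1) * g c := by
  rw [← sum_fiberwise' univ (fun x : F => x ^ 2) g]
  refine sum_congr rfl fun c _ => ?_
  rw [sum_const, nsmul_eq_mul, ← quadraticChar_card_sqrts hF c, Set.toFinset_ofPred]

lemma sum_balancedDelta_sub_sq (hF : ringChar F ≠ 2) (a : F) :
    ∑ x, balancedDelta (a - x ^ 2) = Fintype.card F * quadraticChar F a := by
  have hroots : ∑ x : F, (if a - x ^ 2 = 0 then (Fintype.card F : ℤ) else 0) =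
      (quadraticChar F a + 1) * Fintype.card F := by
    rw [sum_comp_sq hF fun c => if a - c = 0 then (Fintype.card F : ℤ) else 0]
    simp only [sub_eq_zero, mul_ite, mul_zero, sum_ite_eq, mem_univ, if_true]
  simp only [balancedDelta, sum_sub_distrib, hroots, sum_const, card_univ, nsmul_eq_mul]
  ring

lemma sum_quadraticChar_mul_sub (hF : ringChar F ≠ 2) (a : F) :
    ∑ c, quadraticChar F c * quadraticChar F (a - c) =
      quadraticChar F (-1) * balancedDelta a := by
  rcases eq_or_ne a 0 with rfl | ha
  · have hterm (c : F) : quadraticChar F c * quadraticChar F (0 - c) =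
        quadraticChar F (-1) * (1 - if c = 0 then 1 else 0) := by
      rw [zero_sub, neg_eq_neg_one_mul c, map_mul]
      split_ifs with hc
      · simp only [hc, MulChar.map_zero, sub_self, mul_zero]
      · linear_combination quadraticChar F (-1) * quadraticChar_sq_one hc
    simp only [hterm, ← mul_sum, sum_sub_distrib, sum_const, card_univ, nsmul_eq_mul, mul_one,
      sum_ite_eq', mem_univ, if_true, balancedDelta_zero]
  · have hjacobi : jacobiSum (quadraticChar F) (quadraticChar F) = -quadraticChar F (-1) := by
      simpa only [(quadraticChar_isQuadratic F).inv] using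
        jacobiSum_nontrivial_inv (quadraticChar_ne_one hF)
    rw [balancedDelta_of_ne_zero ha, mul_neg_one, ← hjacobi, jacobiSum,
      ← Equiv.sum_comp (Equiv.mulLeft₀ a ha)]
    refine sum_congr rfl fun c _ => ?_
    rw [Equiv.mulLeft₀_apply, ← mul_one_sub, map_mul, map_mul]
    linear_combination
      (quadraticChar F c * quadraticChar F (1 - c)) * quadraticChar_sq_one ha

lemma sum_quadraticChar_sub_sq (hF : ringChar F ≠ 2) (a : F) :
    ∑ x, quadraticChar F (a - x ^ 2) = quadraticChar F (-1) * balancedDelta a := by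
  have hmean : ∑ c, quadraticChar F (a - c) = 0 :=
    ((Equiv.subLeft a).sum_comp (quadraticChar F)).trans (quadraticChar_sum_zero hF)
  rw [sum_comp_sq hF fun c => quadraticChar F (a - c)]
  simp only [add_one_mul, sum_add_distrib, hmean, add_zero, sum_quadraticChar_mul_sub hF]

lemma sum_balancedDelta_sub_dotProduct_self (hF : ringChar F ≠ 2) (k : ℕ) (a : F) :
    ∑ z : Fin (2 * k + 1) → F, balancedDelta (a - z ⬝ᵥ z) =
      Fintype.card F ^ (k + 1) * quadraticChar F (-1) ^ k * quadraticChar F a := by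
  induction k generalizing a with
  | zero =>
    change ∑ z : Fin (0 + 1) → F, _ = _
    rw [sum_sub_dotProduct_self_succ]
    simp only [dotProduct, univ_eq_empty, sum_empty, sub_zero, univ_unique, sum_singleton,
      sum_balancedDelta_sub_sq hF, zero_add, pow_one, pow_zero, mul_one]
  | succ k ih =>
    rw [show 2 * (k + 1) + 1 = 2 * k + 1 + 1 + 1 by ring, sum_sub_dotProduct_self_succ]
    simp only [sum_sub_dotProduct_self_succ (n := 2 * k + 1), ih, ← mul_sum,
      sum_quadraticChar_sub_sq hF, sum_balancedDelta_sub_sq hF]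
    ring

lemma abs_quadraticChar_le_one (a : F) : |quadraticChar F a| ≤ 1 := by
  rcases quadraticChar_isQuadratic F a with h | h | h <;> simp [h]

lemma abs_sum_balancedDelta_sub_dotProduct_self_le (hF : ringChar F ≠ 2) (k : ℕ) (a : F) :
    |∑ z : Fin (2 * k + 1) → F, balancedDelta (a - z ⬝ᵥ z)| ≤ Fintype.card F ^ (k + 1) := by
  rw [sum_balancedDelta_sub_dotProduct_self hF, mul_assoc, abs_mul, abs_mul, abs_pow, abs_pow,
    Nat.abs_cast]
  refine mul_le_of_le_one_right (by positivity) (mul_le_one₀ ?_ (abs_nonneg _) ?_)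
  · exact pow_le_one₀ (abs_nonneg _) (abs_quadraticChar_le_one _)
  · exact abs_quadraticChar_le_one _

lemma abs_sum_balancedDelta_quadratic_le (hF : ringChar F ≠ 2) {k : ℕ} {c : F} (hc : c ≠ 0)
    (b : Fin (2 * k + 1) → F) (e : F) :
    |∑ z, balancedDelta (c * z ⬝ᵥ z + z ⬝ᵥ b + e)| ≤ Fintype.card F ^ (k + 1) := by
  have h2c : 2 * c ≠ 0 := mul_ne_zero (Ring.two_ne_zero hF) hc
  have hbij : Function.Bijective fun z : Fin (2 * k + 1) → F => (2 * c) • z + b :=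
    (Equiv.addRight b).bijective.comp (MulAction.bijective₀ h2c)
  have hsquare (z : Fin (2 * k + 1) → F) :
      b ⬝ᵥ b - 4 * c * e - ((2 * c) • z + b) ⬝ᵥ ((2 * c) • z + b) =
        -2 * (2 * c) * (c * z ⬝ᵥ z + z ⬝ᵥ b + e) := by
    simp only [add_dotProduct, dotProduct_add, smul_dotProduct, dotProduct_smul, smul_eq_mul,
      dotProduct_comm b z]
    ring
  have hcoeff : -2 * (2 * c) ≠ 0 := mul_ne_zero (neg_ne_zero.2 (Ring.two_ne_zero hF)) h2c
  calc
    _ = |∑ z : Fin (2 * k + 1) → F, balancedDelta (b ⬝ᵥ b - 4 * c * e - z ⬝ᵥ z)| := by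
      rw [← hbij.sum_comp fun w => balancedDelta (b ⬝ᵥ b - 4 * c * e - w ⬝ᵥ w)]
      simp only [hsquare, balancedDelta_mul_left hcoeff]
    _ ≤ _ := abs_sum_balancedDelta_sub_dotProduct_self_le hF k _

end QuadraticSums

section Defect

/-- The quantity whose vanishing says that `s - (z, z ⬝ z)` lies on the paraboloid. -/
def paraboloidDefect {F ι : Type*} [Ring F] [Fintype ι] (s : (ι → F) × F) (z : ι → F) : F :=
  (s.1 - z) ⬝ᵥ (s.1 - z) - (s.2 - z ⬝ᵥ z)

lemma paraboloidDefect_eq {F ι : Type*} [CommRing F] [Fintype ι] (s : (ι → F) × F)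
    (z : ι → F) :
    paraboloidDefect s z = 2 * z ⬝ᵥ z - 2 * z ⬝ᵥ s.1 + (s.1 ⬝ᵥ s.1 - s.2) := by
  simp only [paraboloidDefect, sub_dotProduct, dotProduct_sub, dotProduct_comm s.1 z]
  ring

variable {F : Type*} [Field F] [Fintype F] [DecidableEq F]

lemma sum_balancedDelta_paraboloidDefect_sub_le {ι : Type*} [Fintype ι] [DecidableEq ι]
    (hF : ringChar F ≠ 2) (s t : (ι → F) × F) :
    ∑ z, balancedDelta (paraboloidDefect s z - paraboloidDefect t z) ≤
      if s = t then (Fintype.card F : ℤ) ^ (Fintype.card ι + 1) else 0 := by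
  have hlinear (z : ι → F) : paraboloidDefect s z - paraboloidDefect t z =
      (s.1 ⬝ᵥ s.1 - s.2 - (t.1 ⬝ᵥ t.1 - t.2)) + z ⬝ᵥ ((2 : F) • (t.1 - s.1)) := by
    simp only [paraboloidDefect_eq, dotProduct_smul, dotProduct_sub, smul_eq_mul]
    ring
  simp only [hlinear]
  rcases eq_or_ne s.1 t.1 with hfst | hfst
  · simp only [hfst, sub_self, smul_zero, dotProduct_zero, add_zero, sub_sub_sub_cancel_left]
    rcases eq_or_ne s.2 t.2 with hsnd | hsnd
    · rw [if_pos (Prod.ext hfst hsnd), hsnd, sub_self, balancedDelta_zero, sum_const, card_univ,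
        nsmul_eq_mul, Fintype.card_fun, Nat.cast_pow, pow_succ]
      gcongr
      exact sub_one_lt _ |>.le
    · rw [if_neg fun h => hsnd (congrArg Prod.snd h),
        balancedDelta_of_ne_zero (sub_ne_zero.2 hsnd.symm)]
      exact sum_nonpos fun _ _ => by norm_num
  · rw [if_neg fun h => hfst (congrArg Prod.fst h)]
    exact (sum_balancedDelta_add_dotProduct _
      (smul_ne_zero (Ring.two_ne_zero hF) (sub_ne_zero.2 hfst.symm))).le

lemma sum_balancedDelta_paraboloidDefect_sub_mul_le (hF : ringChar F ≠ 2) {k : ℕ}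
    (s t : (Fin (2 * k + 1) → F) × F) {r : F} (hr : r ≠ 1) :
    ∑ z, balancedDelta (paraboloidDefect s z - r * paraboloidDefect t z) ≤
      Fintype.card F ^ (k + 1) := by
  have hquadratic (z : Fin (2 * k + 1) → F) :
      paraboloidDefect s z - r * paraboloidDefect t z =
        2 * (1 - r) * z ⬝ᵥ z + z ⬝ᵥ ((2 : F) • (r • t.1 - s.1)) +
          (s.1 ⬝ᵥ s.1 - s.2 - r * (t.1 ⬝ᵥ t.1 - t.2)) := by
    simp only [paraboloidDefect_eq, dotProduct_smul, dotProduct_sub, smul_eq_mul]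
    ring
  simp only [hquadratic]
  exact (abs_le.1 (abs_sum_balancedDelta_quadratic_le hF
    (mul_ne_zero (Ring.two_ne_zero hF) (sub_ne_zero.2 hr.symm)) _ _)).2

lemma sum_balancedDelta_mul_paraboloidDefect_le (hF : ringChar F ≠ 2) {k : ℕ}
    (s t : (Fin (2 * k + 1) → F) × F) :
    ∑ z, balancedDelta (paraboloidDefect s z) * balancedDelta (paraboloidDefect t z) ≤
      (Fintype.card F : ℤ) ^ (k + 2) +
        if s = t then (Fintype.card F : ℤ) ^ (2 * k + 2) else 0 := by
  have hone : (1 : F) ∈ univ.erase 0 := mem_erase.2 ⟨one_ne_zero, mem_univ 1⟩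
  have hdiag := sum_balancedDelta_paraboloidDefect_sub_le hF s t
  rw [Fintype.card_fin] at hdiag
  have hoff : ∑ r ∈ (univ.erase (0 : F)).erase 1,
      ∑ z, balancedDelta (paraboloidDefect s z - r * paraboloidDefect t z) ≤
        (Fintype.card F : ℤ) ^ (k + 2) := by
    calc
      _ ≤ #((univ.erase (0 : F)).erase 1) • (Fintype.card F : ℤ) ^ (k + 1) :=
        sum_le_card_nsmul _ _ _ fun r hr =>
          sum_balancedDelta_paraboloidDefect_sub_mul_le hF s t (ne_of_mem_erase hr)
      _ ≤ Fintype.card F • (Fintype.card F : ℤ) ^ (k + 1) :=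
        nsmul_le_nsmul_left (by positivity) (card_le_univ _)
      _ = _ := by rw [nsmul_eq_mul, ← pow_succ']
  simp only [balancedDelta_mul_balancedDelta]
  rw [sum_comm, ← add_sum_erase _ _ hone]
  simp only [one_mul]
  linarith

end Defect

section AdditiveEnergy

lemma addEnergy_eq_card_filter_add_sub_mem {G : Type*} [AddCommGroup G] [DecidableEq G]
    (A B : Finset G) :
    addEnergy A B = #{p ∈ (A ×ˢ B) ×ˢ A | p.1.1 + p.1.2 - p.2 ∈ B} := by
  rw [addEnergy_eq_card_filter]
  refine card_nbij' (fun p => (p.1, p.2.1)) (fun p => (p.1, p.2, p.1.1 + p.1.2 - p.2))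
    ?_ ?_ ?_ ?_
  · rintro ⟨⟨x, y⟩, z, w⟩ h
    simp only [coe_filter, mem_product, Set.mem_ofPred_eq] at h ⊢
    rw [h.2, add_sub_cancel_left]
    exact ⟨⟨h.1.1, h.1.2.1⟩, h.1.2.2⟩
  · rintro ⟨⟨x, y⟩, z⟩ h
    simp only [coe_filter, mem_product, Set.mem_ofPred_eq] at h ⊢
    exact ⟨⟨h.1.1, h.1.2, h.2⟩, (add_sub_cancel _ _).symm⟩
  · rintro ⟨⟨x, y⟩, z, w⟩ h
    simp only [coe_filter, Set.mem_ofPred_eq] at h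
    simp only [h.2, add_sub_cancel_left]
  · exact fun _ _ => rfl

lemma addEnergy_le_card_sq_mul_card {G : Type*} [AddCommGroup G] [DecidableEq G]
    (A B : Finset G) : addEnergy A B ≤ #A ^ 2 * #B := by
  rw [addEnergy_eq_card_filter_add_sub_mem]
  refine (card_filter_le _ _).trans_eq ?_
  rw [card_product, card_product]
  ring

section Paraboloid

variable {F ι : Type*} [Ring F] [Fintype ι] {A : Finset ((ι → F) × F)}

lemma injOn_fst_of_forall_mem_paraboloid (hA : ∀ x ∈ A, x.2 = x.1 ⬝ᵥ x.1) :
    Set.InjOn Prod.fst (A : Set ((ι → F) × F)) := fun x hx y hy hxy =>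
  Prod.ext hxy (by rw [hA x hx, hA y hy, hxy])

variable [DecidableEq F]

lemma addEnergy_le_card_paraboloidDefect_eq_zero (hA : ∀ x ∈ A, x.2 = x.1 ⬝ᵥ x.1) :
    addEnergy A A ≤ #{p ∈ (A ×ˢ A) ×ˢ A | paraboloidDefect (p.1.1 + p.1.2) p.2.1 = 0} := by
  rw [addEnergy_eq_card_filter_add_sub_mem]
  refine card_le_card fun p hp => ?_
  obtain ⟨hp, hmem⟩ := mem_filter.1 hp
  have hz : p.2.2 = p.2.1 ⬝ᵥ p.2.1 := hA _ (mem_product.1 hp).2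
  have hw : (p.1.1 + p.1.2).2 - p.2.2 =
      ((p.1.1 + p.1.2).1 - p.2.1) ⬝ᵥ ((p.1.1 + p.1.2).1 - p.2.1) := hA _ hmem
  exact mem_filter.2 ⟨hp, by rw [paraboloidDefect, ← hw, hz, sub_self]⟩

end Paraboloid

variable {F : Type*} [Field F] [Fintype F] [DecidableEq F]

/-- The balanced count of pairs `(x, y) ∈ A × A` for which `x + y - (z, z ⬝ z)` lies on the
paraboloid: `q` times their number, minus the number `|A|²` of all pairs. -/
def balancedIncidence {ι : Type*} [Fintype ι] (A : Finset ((ι → F) × F)) (z : ι → F) : ℤ :=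
  ∑ p ∈ A ×ˢ A, balancedDelta (paraboloidDefect (p.1 + p.2) z)

lemma sum_sq_balancedIncidence_le (hF : ringChar F ≠ 2) {k : ℕ}
    (A : Finset ((Fin (2 * k + 1) → F) × F)) :
    ∑ z, balancedIncidence A z ^ 2 ≤
      #A ^ 4 * Fintype.card F ^ (k + 2) + Fintype.card F ^ (2 * k + 2) * addEnergy A A := by
  calc
    _ = ∑ t ∈ (A ×ˢ A) ×ˢ A ×ˢ A, ∑ z,
          balancedDelta (paraboloidDefect (t.1.1 + t.1.2) z) *
            balancedDelta (paraboloidDefect (t.2.1 + t.2.2) z) := by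
      rw [sum_comm]
      refine sum_congr rfl fun z _ => ?_
      rw [sq, balancedIncidence, sum_mul_sum, ← sum_product']
    _ ≤ ∑ t ∈ (A ×ˢ A) ×ˢ A ×ˢ A, ((Fintype.card F : ℤ) ^ (k + 2) +
          if t.1.1 + t.1.2 = t.2.1 + t.2.2 then (Fintype.card F : ℤ) ^ (2 * k + 2) else 0) :=
      sum_le_sum fun t _ => sum_balancedDelta_mul_paraboloidDefect_le hF _ _
    _ = _ := by
      rw [sum_add_distrib, sum_const, ← sum_filter, sum_const, ← addEnergy_eq_card_filter]
      simp only [card_product, nsmul_eq_mul]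
      push_cast
      ring

lemma card_mul_addEnergy_sub_le_sum_balancedIncidence {ι : Type*} [Fintype ι]
    {A : Finset ((ι → F) × F)} (hA : ∀ x ∈ A, x.2 = x.1 ⬝ᵥ x.1) :
    (Fintype.card F : ℤ) * addEnergy A A - #A ^ 3 ≤ ∑ x ∈ A, balancedIncidence A x.1 := by
  calc
    _ ≤ (Fintype.card F : ℤ) *
          #{p ∈ (A ×ˢ A) ×ˢ A | paraboloidDefect (p.1.1 + p.1.2) p.2.1 = 0} - #A ^ 3 := by
      gcongr
      exact addEnergy_le_card_paraboloidDefect_eq_zero hA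
    _ = ∑ p ∈ (A ×ˢ A) ×ˢ A, balancedDelta (paraboloidDefect (p.1.1 + p.1.2) p.2.1) := by
      simp only [balancedDelta, sum_sub_distrib, ← sum_filter, sum_const, card_product,
        nsmul_eq_mul]
      push_cast
      ring
    _ = _ := by
      rw [sum_product_right]
      rfl

variable {k : ℕ} {A : Finset ((Fin (2 * k + 1) → F) × F)}

lemma sq_card_mul_addEnergy_sub_le (hF : ringChar F ≠ 2) (hA : ∀ x ∈ A, x.2 = x.1 ⬝ᵥ x.1)
    (hlarge : #A ^ 3 ≤ Fintype.card F * addEnergy A A) :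
    ((Fintype.card F : ℤ) * addEnergy A A - #A ^ 3) ^ 2 ≤
      #A * (#A ^ 4 * Fintype.card F ^ (k + 2) +
        Fintype.card F ^ (2 * k + 2) * addEnergy A A) := by
  have hnonneg : 0 ≤ (Fintype.card F : ℤ) * addEnergy A A - #A ^ 3 :=
    sub_nonneg.2 (mod_cast hlarge)
  calc
    _ ≤ (∑ x ∈ A, balancedIncidence A x.1) ^ 2 :=
      pow_le_pow_left₀ hnonneg (card_mul_addEnergy_sub_le_sum_balancedIncidence hA) 2
    _ ≤ #A * ∑ x ∈ A, balancedIncidence A x.1 ^ 2 := sq_sum_le_card_mul_sum_sq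
    _ = #A * ∑ z ∈ A.image Prod.fst, balancedIncidence A z ^ 2 := by
      rw [sum_image (injOn_fst_of_forall_mem_paraboloid hA)]
    _ ≤ #A * ∑ z, balancedIncidence A z ^ 2 := by
      gcongr
      exact subset_univ _
    _ ≤ _ := by
      gcongr
      exact sum_sq_balancedIncidence_le hF A

lemma sq_le_of_sq_mul_sub_le {R : Type*} [CommRing R] [LinearOrder R] [IsStrictOrderedRing R]
    {q s N L : R} (hq : 0 < q) (hs : 0 ≤ s) (hsN : s ≤ N) (hcube : L ≤ N ^ 3)
    (hlarge : 2 * N ^ 3 ≤ q * L)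
    (hsq : (q * L - N ^ 3) ^ 2 ≤ q ^ 2 * (N * (s * N ^ 4 + s * (s * L)))) :
    L ^ 2 ≤ 8 * s * N ^ 5 := by
  have hN : 0 ≤ N := hs.trans hsN
  have hN3 : 0 ≤ N ^ 3 := pow_nonneg hN 3
  have htail : s * L ≤ N ^ 4 := by
    calc
      s * L ≤ s * N ^ 3 := by gcongr
      _ ≤ N * N ^ 3 := by gcongr
      _ = N ^ 4 := by ring
  refine le_of_mul_le_mul_left ?_ (pow_pos hq 2)
  calc
    q ^ 2 * L ^ 2 = (q * L) ^ 2 := by ring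
    _ ≤ (2 * (q * L - N ^ 3)) ^ 2 := pow_le_pow_left₀ (by linarith) (by linarith) 2
    _ = 4 * (q * L - N ^ 3) ^ 2 := by ring
    _ ≤ 4 * (q ^ 2 * (N * (s * N ^ 4 + s * N ^ 4))) := by
      gcongr
      exact hsq.trans (by gcongr)
    _ = q ^ 2 * (8 * s * N ^ 5) := by ring

lemma addEnergy_dichotomy (hF : ringChar F ≠ 2) (hA : ∀ x ∈ A, x.2 = x.1 ⬝ᵥ x.1)
    (hcard : Fintype.card F ^ k ≤ #A) :
    Fintype.card F * addEnergy A A ≤ 2 * #A ^ 3 ∨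
      addEnergy A A ^ 2 ≤ 8 * Fintype.card F ^ k * #A ^ 5 := by
  refine or_iff_not_imp_left.2 fun hlarge => ?_
  have hsq := sq_card_mul_addEnergy_sub_le hF hA (by omega)
  have hcube : addEnergy A A ≤ #A ^ 3 := (addEnergy_le_card_sq_mul_card A A).trans_eq (by ring)
  have hbound : (addEnergy A A : ℤ) ^ 2 ≤ 8 * (Fintype.card F : ℤ) ^ k * (#A : ℤ) ^ 5 :=
    sq_le_of_sq_mul_sub_le (q := (Fintype.card F : ℤ)) (mod_cast Fintype.card_pos)
      (by positivity) (mod_cast hcard) (mod_cast hcube) (mod_cast (not_le.1 hlarge).le)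
      (hsq.trans_eq (by ring))
  exact_mod_cast hbound

end AdditiveEnergy

section Exponents

lemma inv_le_rpow_of_le_pow {q N : ℝ} {k : ℕ} (hq : 0 < q) (hN : 0 < N)
    (hNq : N ≤ q ^ (2 * k + 1)) : q⁻¹ ≤ (q ^ k / N) ^ (1 / ((k : ℝ) + 1)) := by
  have hbase : q⁻¹ ^ (k + 1) ≤ q ^ k / N := by
    rw [inv_pow, le_div_iff₀ hN, inv_mul_le_iff₀ (by positivity), ← pow_add]
    exact hNq.trans_eq (by ring)
  calc
    q⁻¹ = (q⁻¹ ^ (k + 1)) ^ (1 / ((k : ℝ) + 1)) := by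
      rw [← Nat.cast_add_one, one_div, Real.pow_rpow_inv_natCast (by positivity) k.succ_ne_zero]
    _ ≤ _ := by gcongr

lemma le_sqrt_mul_of_sq_le {s N L : ℝ} (hs : 0 ≤ s) (hN : 0 < N)
    (h : L ^ 2 ≤ 8 * s * N ^ 5) : L ≤ 3 * √(s / N) * N ^ 3 := by
  refine le_of_sq_le_sq ?_ (by positivity)
  calc
    L ^ 2 ≤ 9 * s * N ^ 5 := h.trans (by gcongr; norm_num)
    _ = (3 * √(s / N) * N ^ 3) ^ 2 := by
      rw [mul_pow, mul_pow, Real.sq_sqrt (by positivity)]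
      field_simp
      ring

lemma le_rpow_of_dichotomy {q N L : ℝ} {k : ℕ} (hk : 1 ≤ k) (hq : 0 < q) (hN : 0 < N)
    (hNq : N ≤ q ^ (2 * k + 1)) (hcube : L ≤ N ^ 3)
    (hdich : q ^ k ≤ N → q * L ≤ 2 * N ^ 3 ∨ L ^ 2 ≤ 8 * q ^ k * N ^ 5) :
    L ≤ 3 * (q ^ k / N) ^ (1 / ((k : ℝ) + 1)) * N ^ 3 := by
  have hk' : (1 : ℝ) ≤ k := mod_cast hk
  rcases le_total N (q ^ k) with hsmall | hlarge
  · have hone : 1 ≤ (q ^ k / N) ^ (1 / ((k : ℝ) + 1)) :=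
      Real.one_le_rpow ((one_le_div₀ hN).2 hsmall) (by positivity)
    exact hcube.trans (le_mul_of_one_le_left (by positivity) (by linarith))
  rcases hdich hlarge with hmain | herror
  · calc
      L ≤ 2 * q⁻¹ * N ^ 3 := by
        rw [mul_right_comm, ← div_eq_mul_inv, le_div_iff₀' hq]
        exact hmain
      _ ≤ 3 * (q ^ k / N) ^ (1 / ((k : ℝ) + 1)) * N ^ 3 := by
        gcongr
        · norm_num
        · exact inv_le_rpow_of_le_pow hq hN hNq
  · calc
      L ≤ 3 * √(q ^ k / N) * N ^ 3 := le_sqrt_mul_of_sq_le (by positivity) hN herror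
      _ ≤ 3 * (q ^ k / N) ^ (1 / ((k : ℝ) + 1)) * N ^ 3 := by
        rw [Real.sqrt_eq_rpow]
        gcongr 3 * ?_ * N ^ 3
        exact Real.rpow_le_rpow_of_exponent_ge (by positivity) ((div_le_one₀ hN).2 hlarge)
          (one_div_le_one_div_of_le two_pos (by linarith))

lemma div_rpow_mul_pow_three_eq {q N : ℝ} (k : ℕ) (hq : 0 < q) (hN : 0 < N) :
    (q ^ k / N) ^ (1 / ((k : ℝ) + 1)) * N ^ 3 =
      q ^ ((k : ℝ) / (k + 1)) * N ^ ((3 * (k : ℝ) + 2) / (k + 1)) := by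
  have hexpq : (k : ℝ) / (k + 1) = k * (1 / (k + 1)) := by ring
  have hexpN : (3 * (k : ℝ) + 2) / (k + 1) = (3 : ℕ) - 1 / (k + 1) := by
    field_simp
    ring
  rw [hexpq, hexpN, Real.rpow_mul hq.le, Real.rpow_natCast, Real.rpow_sub hN,
    Real.rpow_natCast, Real.div_rpow (by positivity) hN.le, div_mul_eq_mul_div, mul_div_assoc]

end Exponents

lemma addEnergy_le_of_forall_mem_paraboloid {F : Type*} [Field F] [Fintype F] [DecidableEq F]
    (hF : ringChar F ≠ 2) {k : ℕ} (hk : 1 ≤ k) {A : Finset ((Fin (2 * k + 1) → F) × F)}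
    (hA : ∀ x ∈ A, x.2 = x.1 ⬝ᵥ x.1) :
    (addEnergy A A : ℝ) ≤ 3 * (Fintype.card F : ℝ) ^ ((k : ℝ) / (k + 1)) *
      (#A : ℝ) ^ ((3 * (k : ℝ) + 2) / (k + 1)) := by
  rcases A.eq_empty_or_nonempty with rfl | hne
  · rw [addEnergy_empty_left, Nat.cast_zero]
    positivity
  have hq : (0 : ℝ) < Fintype.card F := mod_cast Fintype.card_pos
  have hN : (0 : ℝ) < #A := mod_cast hne.card_pos
  have hcard : #A ≤ Fintype.card F ^ (2 * k + 1) := by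
    rw [← card_image_of_injOn (injOn_fst_of_forall_mem_paraboloid hA)]
    exact (card_le_univ _).trans_eq (by rw [Fintype.card_fun, Fintype.card_fin])
  have hcube : addEnergy A A ≤ #A ^ 3 := (addEnergy_le_card_sq_mul_card A A).trans_eq (by ring)
  rw [mul_assoc, ← div_rpow_mul_pow_three_eq k hq hN, ← mul_assoc]
  refine le_rpow_of_dichotomy hk hq hN (mod_cast hcard) (mod_cast hcube) fun hlarge => ?_
  exact_mod_cast addEnergy_dichotomy hF hA (mod_cast hlarge)

lemma lambda4_eq_addEnergy {F : Type} [CommRing F] [Fintype F] [DecidableEq F] {d : ℕ}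
    (E : Finset ((Fin (d - 1) → F) × F)) : lambda4 E = addEnergy E E := by
  rw [addEnergy_eq_card_filter, lambda4]
  exact card_equiv (Equiv.prodAssoc _ _ _).symm (by simp [and_assoc])

/-- For even `d ≥ 4`, `Λ₄(E) ≲ q^{(d-2)/d} |E|^{(3d-2)/d}`. -/
theorem additive_quadruples_bound (d : ℕ) (hd4 : 4 ≤ d) (hdeven : Even d) :
    ∃ C : ℝ, 0 < C ∧
      ∀ (F : Type) [Field F] [Fintype F] [DecidableEq F], 2 < ringChar F →
        ∀ E : Finset ((Fin (d - 1) → F) × F), E ⊆ parab F d →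
          (lambda4 E : ℝ) ≤
            C * (Fintype.card F : ℝ) ^ (((d : ℝ) - 2) / d) *
              (E.card : ℝ) ^ ((3 * (d : ℝ) - 2) / d) := by
  obtain ⟨k, rfl⟩ : ∃ k, d = 2 * k + 2 := by
    obtain ⟨r, rfl⟩ := hdeven
    exact ⟨r - 1, by omega⟩
  refine ⟨3, by norm_num, fun F _ _ _ hF E hE => ?_⟩
  have hparab : ∀ x ∈ E, x.2 = x.1 ⬝ᵥ x.1 := fun x hx => (mem_filter.1 (hE hx)).2
  have hexpq : (((2 * k + 2 : ℕ) : ℝ) - 2) / (2 * k + 2 : ℕ) = k / (k + 1) := by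
    push_cast
    field_simp
    ring
  have hexpN : (3 * ((2 * k + 2 : ℕ) : ℝ) - 2) / (2 * k + 2 : ℕ) = (3 * k + 2) / (k + 1) := by
    push_cast
    field_simp
    ring
  rw [lambda4_eq_addEnergy, hexpq, hexpN]
  exact addEnergy_le_of_forall_mem_paraboloid hF.ne' (by omega) hparab
end
end

section
/- Let d ≥ 4 be even. There exists a constant C = C(d) > 0 such that for every finite field F_q with q elements of characteristic greater than two and every subset E of the paraboloid S ⊂ F_q^d, one has Λ_4(E) ≤ C · min{ |E|^3, q^{−1}|E|^3 + q^{(d−2)/4}|E|^{5/2} + q^{(d−2)/2}|E|^2 }. -/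
open Finset

noncomputable section

/-!
Two elements `x, y` of a paraboloid and a third one `z` extend to an additive quadruple exactly when
their projections to `F^{d-1}` span a right angle at `z̄`, so `Λ₄(E)` is at most the number of right
angles in the projection `A` of `E`, a set in a space of odd dimension `d - 1 = 2k + 1`. If one leg
of the angle has nonzero length `(z - x)·(z - x)`, then `y` lies on a hyperplane through `z`
attached to `z - x`. For fixed `x` these hyperplanes are pairwise either transversal or disjoint,
and a second moment argument bounds the incidences. If both legs have length zero, so does the
hypotenuse; the Loomis–Whitney inequality bounds the number of such triangles by `D^{3/2}`, where
`D` counts the pairs of `A` at distance zero. In odd dimension the Fourier transform of the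
quadratic character of `m·m` is an explicit affine function of the indicator of the isotropic cone,
which gives `D ≤ |A|²/q + q^k |A|`.
-/

section ExponentialSums

lemma addChar_sum_eq_prod {G M κ : Type*} [AddCommMonoid G] [CommMonoid M] (ψ : AddChar G M)
    (s : Finset κ) (f : κ → G) : ψ (∑ i ∈ s, f i) = ∏ i ∈ s, ψ (f i) :=
  map_prod ψ.toMonoidHom (fun i => Multiplicative.ofAdd (f i)) s

variable {F R : Type*} [Field F] [Fintype F] [DecidableEq F] [CommRing R]

variable (F R) in
/-- The quadratic character of `F` with values in `R`, so that it can be multiplied with the values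
of additive characters. -/
def quadraticMulChar : MulChar F R :=
  (quadraticChar F).ringHomComp (Int.castRingHom R)

lemma quadraticMulChar_isQuadratic : (quadraticMulChar F R).IsQuadratic :=
  (quadraticChar_isQuadratic F).comp _

lemma quadraticMulChar_mul_self {a : F} (ha : a ≠ 0) :
    quadraticMulChar F R a * quadraticMulChar F R a = 1 := by
  simp only [quadraticMulChar, MulChar.ringHomComp_apply]
  rw [← map_mul, ← sq, quadraticChar_sq_one ha, map_one]

lemma quadraticMulChar_ne_one [CharZero R] (hF : ringChar F ≠ 2) : quadraticMulChar F R ≠ 1 :=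
  (MulChar.ringHomComp_ne_one_iff (Int.castRingHom R).injective_int).2 (quadraticChar_ne_one hF)

lemma card_filter_sq_eq (hF : ringChar F ≠ 2) (a : F) :
    (#{x : F | x ^ 2 = a} : R) = quadraticMulChar F R a + 1 := by
  have hcard := congrArg (Int.castRingHom R) (quadraticChar_card_sqrts hF a)
  simpa [quadraticMulChar] using hcard

lemma sum_quadraticMulChar_mul_addChar_of_ne_zero (ψ : AddChar F R) {a : F} (ha : a ≠ 0) :
    ∑ s, quadraticMulChar F R s * ψ (s * a) =
      quadraticMulChar F R a * gaussSum (quadraticMulChar F R) ψ := by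
  rw [← gaussSum_mulShift _ ψ (Units.mk0 a ha), Units.val_mk0, ← mul_assoc,
    quadraticMulChar_mul_self ha, one_mul]
  simp only [gaussSum, AddChar.mulShift_apply, mul_comm]

lemma sum_quadraticMulChar_mul_addChar [IsDomain R] [CharZero R] (hF : ringChar F ≠ 2)
    (ψ : AddChar F R) (a : F) :
    ∑ s, quadraticMulChar F R s * ψ (s * a) =
      quadraticMulChar F R a * gaussSum (quadraticMulChar F R) ψ := by
  obtain rfl | ha := eq_or_ne a 0
  · rw [MulChar.map_zero, zero_mul]
    simpa using MulChar.sum_eq_zero_of_ne_one (quadraticMulChar_ne_one (R := R) hF)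
  · exact sum_quadraticMulChar_mul_addChar_of_ne_zero ψ ha

variable [IsDomain R] {ψ : AddChar F R} {ι : Type*} [Fintype ι] [DecidableEq ι]

lemma sum_addChar_dotProduct (hψ : ψ.IsPrimitive) (v : ι → F) :
    ∑ m : ι → F, ψ (m ⬝ᵥ v) = if v = 0 then (Fintype.card F : R) ^ Fintype.card ι else 0 := by
  simp only [dotProduct, addChar_sum_eq_prod]
  rw [← Fintype.prod_sum fun i x => ψ (x * v i)]
  simp only [AddChar.sum_mulShift _ hψ]
  split_ifs with hv
  · simp [hv]
  · obtain ⟨i, hi⟩ := Function.ne_iff.1 hv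
    exact prod_eq_zero (mem_univ i) (by simp [show v i ≠ 0 from hi])

lemma sum_addChar_mul_sq (hF : ringChar F ≠ 2) (hψ : ψ.IsPrimitive) {s : F} (hs : s ≠ 0) :
    ∑ x, ψ (s * x ^ 2) = quadraticMulChar F R s * gaussSum (quadraticMulChar F R) ψ := by
  have hfiber (y : F) : ∑ x with x ^ 2 = y, ψ (s * x ^ 2) =
      quadraticMulChar F R y * ψ (y * s) + ψ (y * s) := by
    calc ∑ x with x ^ 2 = y, ψ (s * x ^ 2) = ∑ x with x ^ 2 = y, ψ (y * s) :=
          sum_congr rfl fun x hx => by rw [(mem_filter.1 hx).2, mul_comm]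
      _ = _ := by rw [sum_const, nsmul_eq_mul, card_filter_sq_eq hF, add_one_mul]
  have hψs : ∑ y, ψ (y * s) = 0 := by simp [AddChar.sum_mulShift s hψ, hs]
  rw [← sum_fiberwise univ fun x : F => x ^ 2]
  simp only [hfiber]
  rw [sum_add_distrib, hψs, add_zero, sum_quadraticMulChar_mul_addChar_of_ne_zero ψ hs]

lemma sum_addChar_mul_dotProduct_self (hF : ringChar F ≠ 2) (hψ : ψ.IsPrimitive) {s : F}
    (hs : s ≠ 0) :
    ∑ m : ι → F, ψ (s * (m ⬝ᵥ m)) =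
      (quadraticMulChar F R s * gaussSum (quadraticMulChar F R) ψ) ^ Fintype.card ι := by
  simp only [dotProduct, mul_sum, addChar_sum_eq_prod, ← sq]
  rw [← Fintype.prod_sum fun _ x => ψ (s * x ^ 2)]
  simp only [sum_addChar_mul_sq hF hψ hs, prod_const, card_univ]

lemma sum_addChar_mul_dotProduct_self_add (hF : ringChar F ≠ 2) (hψ : ψ.IsPrimitive) {s : F}
    (hs : s ≠ 0) (v : ι → F) :
    ∑ m : ι → F, ψ (s * (m ⬝ᵥ m) + m ⬝ᵥ v) =
      (quadraticMulChar F R s * gaussSum (quadraticMulChar F R) ψ) ^ Fintype.card ι *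
        ψ (s⁻¹ * (-(v ⬝ᵥ v) / 4)) := by
  have h2 : (2 : F) ≠ 0 := Ring.two_ne_zero hF
  have h4 : (4 : F) ≠ 0 := by simpa [← two_add_two_eq_four, ← two_mul] using h2
  rw [← sum_addChar_mul_dotProduct_self hF hψ hs, sum_mul]
  refine Fintype.sum_equiv (Equiv.addRight ((2 * s)⁻¹ • v)) _ _ fun m => ?_
  rw [← AddChar.map_add_eq_mul]
  congr 1
  simp only [Equiv.coe_addRight, add_dotProduct, dotProduct_add, smul_dotProduct, dotProduct_smul,
    smul_eq_mul, dotProduct_comm v m]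
  field_simp
  ring

end ExponentialSums

section IsotropicPairs

variable {F : Type*} [Field F] [Fintype F] {ι : Type*} [Fintype ι]

lemma sum_quadraticMulChar_dotProduct_self_mul_addChar [DecidableEq F] [DecidableEq ι]
    (hF : ringChar F ≠ 2) {ψ : AddChar F ℂ} (hψ : ψ.IsPrimitive) {k : ℕ}
    (hι : Fintype.card ι = 2 * k + 1) (v : ι → F) :
    ∑ m : ι → F, quadraticMulChar F ℂ (m ⬝ᵥ m) * ψ (m ⬝ᵥ v) =
      (quadraticMulChar F ℂ (-1) * Fintype.card F) ^ k *
        ((if v ⬝ᵥ v = 0 then (Fintype.card F : ℂ) else 0) - 1) := by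
  set χ := quadraticMulChar F ℂ with hχ
  set g := gaussSum χ ψ
  have h4 : (4 : F) ≠ 0 := by
    simpa [← two_add_two_eq_four, ← two_mul] using Ring.two_ne_zero hF
  have hχ1 : χ ≠ 1 := quadraticMulChar_ne_one hF
  have hg0 : g ≠ 0 := gaussSum_ne_zero_of_nontrivial (by simp) hχ1 hψ
  have hgsq : χ (-1) * Fintype.card F = g ^ 2 :=
    (gaussSum_sq hχ1 quadraticMulChar_isQuadratic hψ).symm
  -- Oddness of the dimension makes the factors `χ s` cancel.
  have hinner (s : F) : ∑ m : ι → F, χ s * ψ (s * (m ⬝ᵥ m) + m ⬝ᵥ v) =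
      g ^ (2 * k + 1) * (ψ (s⁻¹ * (-(v ⬝ᵥ v) / 4)) - if s = 0 then 1 else 0) := by
    obtain rfl | hs := eq_or_ne s 0
    · simp [MulChar.map_zero χ]
    · have hχs : χ s * χ s ^ (2 * k + 1) = 1 := by
        rw [← pow_succ', show 2 * k + 1 + 1 = 2 * (k + 1) by ring, pow_mul, sq,
          quadraticMulChar_mul_self hs, one_pow]
      rw [← mul_sum, sum_addChar_mul_dotProduct_self_add hF hψ hs, hι, if_neg hs, sub_zero,
        mul_pow, ← mul_assoc, ← mul_assoc, hχs, one_mul]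
  have houter : ∑ s : F, ψ (s⁻¹ * (-(v ⬝ᵥ v) / 4)) =
      if v ⬝ᵥ v = 0 then (Fintype.card F : ℂ) else 0 := by
    refine (Equiv.sum_comp (Equiv.inv F) fun s => ψ (s * (-(v ⬝ᵥ v) / 4))).trans ?_
    rw [AddChar.sum_mulShift _ hψ]
    simp [h4]
  refine mul_left_cancel₀ hg0 ?_
  calc g * ∑ m : ι → F, χ (m ⬝ᵥ m) * ψ (m ⬝ᵥ v)
      = ∑ m : ι → F, ∑ s, χ s * ψ (s * (m ⬝ᵥ m) + m ⬝ᵥ v) := by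
        rw [mul_sum]
        refine sum_congr rfl fun m _ => ?_
        rw [← mul_assoc, mul_comm g, ← sum_quadraticMulChar_mul_addChar hF ψ, sum_mul]
        simp only [AddChar.map_add_eq_mul, mul_assoc, hχ]
    _ = g ^ (2 * k + 1) * ((if v ⬝ᵥ v = 0 then (Fintype.card F : ℂ) else 0) - 1) := by
        rw [sum_comm, sum_congr rfl fun s _ => hinner s, ← mul_sum, sum_sub_distrib, houter]
        simp
    _ = _ := by rw [hgsq]; ring

lemma sum_mul_norm_sq_sum_addChar [DecidableEq ι] (ψ : AddChar F ℂ) (w : (ι → F) → ℂ)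
    (A : Finset (ι → F)) :
    ∑ m, w m * (‖∑ x ∈ A, ψ (m ⬝ᵥ x)‖ : ℂ) ^ 2 =
      ∑ x ∈ A, ∑ y ∈ A, ∑ m, w m * ψ (m ⬝ᵥ (x - y)) := by
  have hexpand (m : ι → F) : (‖∑ x ∈ A, ψ (m ⬝ᵥ x)‖ : ℂ) ^ 2 =
      ∑ x ∈ A, ∑ y ∈ A, ψ (m ⬝ᵥ (x - y)) := by
    rw [← Complex.mul_conj', map_sum, sum_mul_sum]
    refine sum_congr rfl fun x _ => sum_congr rfl fun y _ => ?_
    rw [dotProduct_sub, sub_eq_add_neg, AddChar.map_add_eq_mul, AddChar.map_neg_eq_conj]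
  simp only [hexpand, mul_sum]
  rw [sum_comm]
  exact sum_congr rfl fun x _ => sum_comm

lemma sum_norm_sq_sum_addChar [DecidableEq ι] {ψ : AddChar F ℂ} (hψ : ψ.IsPrimitive)
    (A : Finset (ι → F)) :
    ∑ m : ι → F, ‖∑ x ∈ A, ψ (m ⬝ᵥ x)‖ ^ 2 = (Fintype.card F : ℝ) ^ Fintype.card ι * #A := by
  classical
  have hcomplex := sum_mul_norm_sq_sum_addChar ψ (fun _ => 1) A
  simp only [one_mul, sum_addChar_dotProduct hψ, sub_eq_zero, sum_ite_eq, sum_ite_mem, inter_self,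
    sum_const, nsmul_eq_mul] at hcomplex
  rw [mul_comm]
  exact_mod_cast hcomplex

variable [DecidableEq F]

/-- The ordered pairs in `A` whose difference is isotropic for the dot product. -/
def isotropicPairs (A : Finset (ι → F)) : Finset ((ι → F) × (ι → F)) :=
  {p ∈ A ×ˢ A | (p.2 - p.1) ⬝ᵥ (p.2 - p.1) = 0}

lemma sum_quadraticMulChar_mul_norm_sq_sum_addChar [DecidableEq ι] (hF : ringChar F ≠ 2)
    {ψ : AddChar F ℂ} (hψ : ψ.IsPrimitive) {k : ℕ} (hι : Fintype.card ι = 2 * k + 1)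
    (A : Finset (ι → F)) :
    ∑ m : ι → F, quadraticMulChar F ℂ (m ⬝ᵥ m) * (‖∑ x ∈ A, ψ (m ⬝ᵥ x)‖ : ℂ) ^ 2 =
      (quadraticMulChar F ℂ (-1) * Fintype.card F) ^ k *
        (Fintype.card F * #(isotropicPairs A) - (#A : ℂ) ^ 2) := by
  have hcard : (#(isotropicPairs A) : ℂ) =
      ∑ x ∈ A, ∑ y ∈ A, if (x - y) ⬝ᵥ (x - y) = 0 then 1 else 0 := by
    rw [isotropicPairs, card_filter, sum_product_right]
    push_cast
    rfl
  rw [sum_mul_norm_sq_sum_addChar, hcard]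
  simp only [sum_quadraticMulChar_dotProduct_self_mul_addChar hF hψ hι, ← mul_sum]
  simp only [sum_sub_distrib, mul_sum, mul_ite, mul_one, mul_zero, sum_const, nsmul_eq_mul, sq]

lemma abs_card_isotropicPairs_sub_le (hF : ringChar F ≠ 2) {k : ℕ}
    (hι : Fintype.card ι = 2 * k + 1) (A : Finset (ι → F)) :
    |(Fintype.card F : ℝ) * #(isotropicPairs A) - (#A : ℝ) ^ 2| ≤
      (Fintype.card F : ℝ) ^ (k + 1) * #A := by
  classical
  set ψ := AddChar.FiniteField.primitiveChar_to_Complex F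
  have hψ : ψ.IsPrimitive := AddChar.FiniteField.primitiveChar_to_Complex_isPrimitive F
  set q := (Fintype.card F : ℝ) with hq
  set χ := quadraticMulChar F ℂ with hχ
  have hq0 : 0 < q := Nat.cast_pos.2 Fintype.card_pos
  have hχneg : ‖χ (-1)‖ = 1 := by
    have hsq : χ (-1) ^ 2 = 1 := by
      rw [sq, hχ, quadraticMulChar_mul_self (neg_ne_zero.2 one_ne_zero)]
    exact Complex.norm_eq_one_of_pow_eq_one hsq two_ne_zero
  have hχle (a : F) : ‖χ a‖ ≤ 1 := by
    rcases quadraticMulChar_isQuadratic (R := ℂ) a with h | h | h <;> simp [hχ, h]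
  have hfourier : ∑ m : ι → F, χ (m ⬝ᵥ m) * (‖∑ x ∈ A, ψ (m ⬝ᵥ x)‖ : ℂ) ^ 2 =
      (χ (-1) * q) ^ k * ((q * #(isotropicPairs A) - (#A : ℝ) ^ 2 : ℝ) : ℂ) := by
    simpa [hq] using sum_quadraticMulChar_mul_norm_sq_sum_addChar hF hψ hι A
  refine le_of_mul_le_mul_left ?_ (pow_pos hq0 k)
  calc q ^ k * |q * #(isotropicPairs A) - (#A : ℝ) ^ 2|
      = ‖∑ m : ι → F, χ (m ⬝ᵥ m) * (‖∑ x ∈ A, ψ (m ⬝ᵥ x)‖ : ℂ) ^ 2‖ := by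
        rw [hfourier, norm_mul, norm_pow, norm_mul, hχneg, one_mul, Complex.norm_real,
          Complex.norm_real, Real.norm_of_nonneg hq0.le, Real.norm_eq_abs]
    _ ≤ ∑ m : ι → F, ‖∑ x ∈ A, ψ (m ⬝ᵥ x)‖ ^ 2 := by
        refine norm_sum_le_of_le _ fun m _ => ?_
        rw [norm_mul, norm_pow, Complex.norm_real, norm_norm]
        exact mul_le_of_le_one_left (by positivity) (hχle _)
    _ = q ^ k * (q ^ (k + 1) * #A) := by
        rw [sum_norm_sq_sum_addChar hψ, hι]
        ring

lemma card_isotropicPairs_le (hF : ringChar F ≠ 2) {k : ℕ}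
    (hι : Fintype.card ι = 2 * k + 1) (A : Finset (ι → F)) :
    (#(isotropicPairs A) : ℝ) ≤
      (Fintype.card F : ℝ)⁻¹ * (#A : ℝ) ^ 2 + (Fintype.card F : ℝ) ^ k * #A := by
  have hq0 : (0 : ℝ) < Fintype.card F := Nat.cast_pos.2 Fintype.card_pos
  have hdev := (abs_le.1 (abs_card_isotropicPairs_sub_le hF hι A)).2
  rw [inv_mul_eq_div, div_add' _ _ _ hq0.ne', le_div_iff₀ hq0]
  linear_combination hdev

end IsotropicPairs

section SecondMoment

variable {α β : Type*} [DecidableEq α]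

/-- The incidences between a point set `Y` and the family of blocks `H p`, `p ∈ Z`. -/
def incidences (H : β → Finset α) (Y : Finset α) (Z : Finset β) : Finset (α × β) :=
  {t ∈ Y ×ˢ Z | t.1 ∈ H t.2}

lemma card_incidences_eq_sum (H : β → Finset α) (Y : Finset α) (Z : Finset β) :
    (#(incidences H Y Z) : ℝ) = ∑ y ∈ Y, ∑ p ∈ Z, if y ∈ H p then 1 else 0 := by
  rw [incidences, card_filter, sum_product]
  push_cast
  rfl

variable [Fintype α]

lemma sum_mul_indicator_sub_one_mul (q : ℝ) (s t : Finset α) :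
    ∑ y, (q * (if y ∈ s then 1 else 0) - 1) * (q * (if y ∈ t then 1 else 0) - 1) =
      q ^ 2 * #(s ∩ t) - q * #s - q * #t + Fintype.card α := by
  have hpoint (y : α) :
      (q * (if y ∈ s then 1 else 0) - 1) * (q * (if y ∈ t then 1 else 0) - 1) =
        q ^ 2 * (if y ∈ s ∩ t then 1 else 0) - q * (if y ∈ s then 1 else 0) -
          q * (if y ∈ t then 1 else 0) + 1 := by
    simp only [mem_inter, ite_and]
    split_ifs <;> ring
  simp only [hpoint, sum_add_distrib, sum_sub_distrib, ← mul_sum, sum_boole, filter_univ_mem]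
  simp

lemma sum_sq_sum_mul_indicator_sub_one_le {q : ℝ} {H : β → Finset α} {Z : Finset β}
    (hcard : ∀ p ∈ Z, q * #(H p) = Fintype.card α)
    (hinter : ∀ p ∈ Z, ∀ p' ∈ Z, p ≠ p' → q ^ 2 * #(H p ∩ H p') ≤ Fintype.card α) :
    ∑ y, (∑ p ∈ Z, (q * (if y ∈ H p then 1 else 0) - 1)) ^ 2 ≤ q * Fintype.card α * #Z := by
  classical
  have hpair (p) (hp : p ∈ Z) (p') (hp' : p' ∈ Z) :
      ∑ y, (q * (if y ∈ H p then 1 else 0) - 1) * (q * (if y ∈ H p' then 1 else 0) - 1) ≤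
        if p = p' then q * Fintype.card α else 0 := by
    rw [sum_mul_indicator_sub_one_mul, hcard p hp, hcard p' hp']
    split_ifs with h
    · subst h
      rw [inter_self, sq, mul_assoc, hcard p hp]
      linarith [(Nat.cast_nonneg (Fintype.card α) : (0 : ℝ) ≤ _)]
    · linarith [hinter p hp p' hp' h]
  calc ∑ y, (∑ p ∈ Z, (q * (if y ∈ H p then 1 else 0) - 1)) ^ 2
      = ∑ p ∈ Z, ∑ p' ∈ Z, ∑ y,
          (q * (if y ∈ H p then 1 else 0) - 1) * (q * (if y ∈ H p' then 1 else 0) - 1) := by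
        simp only [sq, sum_mul_sum]
        rw [sum_comm]
        exact sum_congr rfl fun p _ => sum_comm
    _ ≤ ∑ p ∈ Z, ∑ p' ∈ Z, if p = p' then q * Fintype.card α else 0 :=
        sum_le_sum fun p hp => sum_le_sum fun p' hp' => hpair p hp p' hp'
    _ = q * Fintype.card α * #Z := by
        simp [sum_ite_eq, sum_ite_mem, mul_comm]

lemma sq_mul_card_incidences_sub_le {q : ℝ} {H : β → Finset α} {Z : Finset β}
    (hcard : ∀ p ∈ Z, q * #(H p) = Fintype.card α)
    (hinter : ∀ p ∈ Z, ∀ p' ∈ Z, p ≠ p' → q ^ 2 * #(H p ∩ H p') ≤ Fintype.card α)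
    (Y : Finset α) :
    (q * #(incidences H Y Z) - #Y * #Z) ^ 2 ≤ q * Fintype.card α * #Y * #Z := by
  have hdeviation : q * #(incidences H Y Z) - #Y * #Z =
      ∑ y ∈ Y, ∑ p ∈ Z, (q * (if y ∈ H p then 1 else 0) - 1) := by
    simp only [card_incidences_eq_sum, sum_sub_distrib, mul_sum, sum_const, nsmul_eq_mul, mul_one]
  calc (q * #(incidences H Y Z) - #Y * #Z) ^ 2
      ≤ #Y * ∑ y ∈ Y, (∑ p ∈ Z, (q * (if y ∈ H p then 1 else 0) - 1)) ^ 2 := by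
        rw [hdeviation]
        exact sq_sum_le_card_mul_sum_sq
    _ ≤ #Y * ∑ y, (∑ p ∈ Z, (q * (if y ∈ H p then 1 else 0) - 1)) ^ 2 := by
        gcongr
        exact subset_univ Y
    _ ≤ #Y * (q * Fintype.card α * #Z) := by
        gcongr
        exact sum_sq_sum_mul_indicator_sub_one_le hcard hinter
    _ = q * Fintype.card α * #Y * #Z := by ring

end SecondMoment

section Hyperplanes

lemma card_fiber_mul_card_of_surjective {G H : Type*} [AddGroup G] [Fintype G] [AddGroup H]
    [Fintype H] [DecidableEq H] {f : G →+ H} (hf : Function.Surjective f) (b : H) :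
    #{x | f x = b} * Fintype.card H = Fintype.card G := by
  have hfiber (c : H) : #{x | f x = c} = #{x | f x = b} :=
    AddMonoidHom.card_fiber_eq_of_mem_range f (hf c) (hf b)
  calc #{x | f x = b} * Fintype.card H = ∑ c : H, #{x | f x = c} := by
        simp only [hfiber, sum_const, card_univ, smul_eq_mul, mul_comm]
    _ = Fintype.card G := (card_eq_sum_card_fiberwise fun _ _ => mem_coe.2 (mem_univ _)).symm

lemma mulVec_surjective_of_linearIndependent_row {F m n : Type*} [Field F] [Finite m]
    [Fintype n] {M : Matrix m n F} (hM : LinearIndependent F M.row) :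
    Function.Surjective M.mulVec := by
  have := Fintype.ofFinite m
  have hrank : Module.finrank F (LinearMap.range M.mulVecLin) = Module.finrank F (m → F) := by
    rw [Module.finrank_fintype_fun_eq_card]
    exact hM.rank_matrix
  exact LinearMap.range_eq_top.1 (Submodule.eq_top_of_finrank_eq hrank)

variable {F : Type*} [Field F] [Fintype F] [DecidableEq F] {ι : Type*} [Fintype ι] [DecidableEq ι]

lemma card_filter_mulVec_eq {m : Type*} [Fintype m] {M : Matrix m ι F}
    (hM : LinearIndependent F M.row) (b : m → F) :
    #{y | M.mulVec y = b} * Fintype.card F ^ Fintype.card m =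
      Fintype.card F ^ Fintype.card ι := by
  classical
  have h := card_fiber_mul_card_of_surjective (f := M.mulVecLin.toAddMonoidHom)
    (mulVec_surjective_of_linearIndependent_row hM) b
  simp only [Fintype.card_fun] at h
  convert h
  rfl

/-- The hyperplane through `z` perpendicular to `z - x`; it is the whole space when `z = x`. -/
def perpHyperplane (x z : ι → F) : Finset (ι → F) :=
  {y | (z - x) ⬝ᵥ (z - y) = 0}

lemma card_perpHyperplane_mul_card {x z : ι → F} (h : z ≠ x) :
    #(perpHyperplane x z) * Fintype.card F = Fintype.card F ^ Fintype.card ι := by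
  have hindep : LinearIndependent F (Matrix.of ![z - x]).row :=
    LinearIndependent.of_subsingleton (0 : Fin 1) (sub_ne_zero.2 h)
  have hmem (y : ι → F) : (z - x) ⬝ᵥ (z - y) = 0 ↔
      (Matrix.of ![z - x]).mulVec y = ![(z - x) ⬝ᵥ z] := by
    simp [dotProduct_sub, sub_eq_zero, eq_comm]
  rw [← card_filter_mulVec_eq hindep ![(z - x) ⬝ᵥ z], perpHyperplane]
  simp only [hmem, Fintype.card_fin, pow_one]

lemma disjoint_perpHyperplane_of_smul {x z z' : ι → F} (hz : (z - x) ⬝ᵥ (z - x) ≠ 0) {c : F}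
    (hc0 : c ≠ 0) (hc1 : c ≠ 1) (hc : z' - x = c • (z - x)) :
    Disjoint (perpHyperplane x z) (perpHyperplane x z') := by
  refine disjoint_left.2 fun y hy hy' => ?_
  simp only [perpHyperplane, mem_filter_univ] at hy hy'
  have hsub : z' - y = (c - 1) • (z - x) + (z - y) := by
    rw [sub_smul, one_smul, ← hc]
    abel
  rw [hc, hsub, dotProduct_add, smul_dotProduct, smul_dotProduct, dotProduct_smul, hy, smul_zero,
    add_zero, smul_eq_mul, smul_eq_mul] at hy'
  exact mul_ne_zero hc0 (mul_ne_zero (sub_ne_zero.2 hc1) hz) hy'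

lemma sq_card_mul_card_perpHyperplane_inter_le {x z z' : ι → F} (hne : z ≠ z')
    (hz : (z - x) ⬝ᵥ (z - x) ≠ 0) (hz' : (z' - x) ⬝ᵥ (z' - x) ≠ 0) :
    Fintype.card F ^ 2 * #(perpHyperplane x z ∩ perpHyperplane x z') ≤
      Fintype.card F ^ Fintype.card ι := by
  by_cases hindep : LinearIndependent F (Matrix.of ![z - x, z' - x]).row
  · have hmem (y : ι → F) : ((z - x) ⬝ᵥ (z - y) = 0 ∧ (z' - x) ⬝ᵥ (z' - y) = 0) ↔
        (Matrix.of ![z - x, z' - x]).mulVec y = ![(z - x) ⬝ᵥ z, (z' - x) ⬝ᵥ z'] := by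
      simp [dotProduct_sub, sub_eq_zero, eq_comm]
    rw [← card_filter_mulVec_eq hindep ![(z - x) ⬝ᵥ z, (z' - x) ⬝ᵥ z'], perpHyperplane,
      perpHyperplane, ← filter_and, mul_comm]
    simp only [hmem, Fintype.card_fin, le_refl]
  · have hzx : z - x ≠ 0 := fun h => hz (by rw [h, zero_dotProduct])
    have hzx' : z' - x ≠ 0 := fun h => hz' (by rw [h, zero_dotProduct])
    have hindep' : ¬ LinearIndependent F ![z - x, z' - x] := hindep
    rw [LinearIndependent.pair_iff' hzx] at hindep'
    push Not at hindep'
    obtain ⟨c, hc⟩ := hindep'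
    have hc0 : c ≠ 0 := fun h => hzx' (by rw [← hc, h, zero_smul])
    have hc1 : c ≠ 1 := fun h => hne (sub_left_inj.1 (by rw [← hc, h, one_smul]))
    have hdisj := disjoint_perpHyperplane_of_smul hz hc0 hc1 hc.symm
    rw [disjoint_iff_inter_eq_empty.1 hdisj, card_empty, mul_zero]
    exact Nat.zero_le _

end Hyperplanes

section RightAngles

lemma sq_sum_mul_mul_le {α β γ : Type*} (s : Finset α) (t : Finset β) (u : Finset γ)
    (f : α → β → ℝ) (g : β → γ → ℝ) (h : α → γ → ℝ) :
    (∑ x ∈ s, ∑ y ∈ t, ∑ z ∈ u, f x y * g y z * h x z) ^ 2 ≤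
      (∑ x ∈ s, ∑ y ∈ t, f x y ^ 2) * (∑ y ∈ t, ∑ z ∈ u, g y z ^ 2) *
        ∑ x ∈ s, ∑ z ∈ u, h x z ^ 2 := by
  calc (∑ x ∈ s, ∑ y ∈ t, ∑ z ∈ u, f x y * g y z * h x z) ^ 2
      = (∑ p ∈ s ×ˢ t, f p.1 p.2 * ∑ z ∈ u, g p.2 z * h p.1 z) ^ 2 := by
        simp only [sum_product, mul_sum, mul_assoc]
    _ ≤ (∑ p ∈ s ×ˢ t, f p.1 p.2 ^ 2) * ∑ p ∈ s ×ˢ t, (∑ z ∈ u, g p.2 z * h p.1 z) ^ 2 :=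
        sum_mul_sq_le_sq_mul_sq _ _ _
    _ ≤ (∑ p ∈ s ×ˢ t, f p.1 p.2 ^ 2) *
          ∑ p ∈ s ×ˢ t, (∑ z ∈ u, g p.2 z ^ 2) * ∑ z ∈ u, h p.1 z ^ 2 := by
        gcongr
        exact sum_mul_sq_le_sq_mul_sq _ _ _
    _ = _ := by
        rw [sum_product, sum_product_right, mul_assoc]
        simp only [← sum_mul_sum]

variable {F : Type*} [Field F] [DecidableEq F] {ι : Type*} [Fintype ι]

/-- The triples `(x, y, z)` in `A` with a right angle at `z`; degenerate triples are included. -/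
def rightAngles (A : Finset (ι → F)) : Finset ((ι → F) × (ι → F) × (ι → F)) :=
  {t ∈ A ×ˢ A ×ˢ A | (t.2.2 - t.1) ⬝ᵥ (t.2.2 - t.2.1) = 0}

/-- The right angles `(x, y, z)` in `A` whose leg `z - x` is not isotropic. -/
def anisotropicRightAngles (A : Finset (ι → F)) : Finset ((ι → F) × (ι → F) × (ι → F)) :=
  {t ∈ rightAngles A | (t.2.2 - t.1) ⬝ᵥ (t.2.2 - t.1) ≠ 0}

/-- The triples in `A` all of whose three differences are isotropic. -/
def isotropicTriangles (A : Finset (ι → F)) : Finset ((ι → F) × (ι → F) × (ι → F)) :=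
  {t ∈ A ×ˢ A ×ˢ A | (t.1, t.2.1) ∈ isotropicPairs A ∧ (t.2.1, t.2.2) ∈ isotropicPairs A ∧
    (t.1, t.2.2) ∈ isotropicPairs A}

lemma card_rightAngles_le_cube (A : Finset (ι → F)) : #(rightAngles A) ≤ #A ^ 3 := by
  calc #(rightAngles A) ≤ #(A ×ˢ A ×ˢ A) := card_filter_le _ _
    _ = #A ^ 3 := by rw [card_product, card_product, pow_three]

lemma card_isotropicTriangles_le_cube (A : Finset (ι → F)) :
    #(isotropicTriangles A) ≤ #A ^ 3 := by
  calc #(isotropicTriangles A) ≤ #(A ×ˢ A ×ˢ A) := card_filter_le _ _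
    _ = #A ^ 3 := by rw [card_product, card_product, pow_three]

lemma dotProduct_sub_self_of_dotProduct_eq_zero {R : Type*} [CommRing R] {u v : ι → R}
    (h : u ⬝ᵥ v = 0) : (u - v) ⬝ᵥ (u - v) = u ⬝ᵥ u + v ⬝ᵥ v := by
  rw [sub_dotProduct, dotProduct_sub, dotProduct_sub, dotProduct_comm v u, h]
  ring

lemma rightAngles_subset (A : Finset (ι → F)) :
    rightAngles A ⊆ anisotropicRightAngles A ∪
      (anisotropicRightAngles A).image (fun t => (t.2.1, t.1, t.2.2)) ∪ isotropicTriangles A := by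
  rintro ⟨x, y, z⟩ ht
  obtain ⟨hA, hxy⟩ := mem_filter.1 ht
  simp only [mem_product] at hA
  obtain ⟨hxA, hyA, hzA⟩ := hA
  have hyx : (z - y) ⬝ᵥ (z - x) = 0 := by rw [dotProduct_comm, hxy]
  by_cases hx : (z - x) ⬝ᵥ (z - x) = 0
  · by_cases hy : (z - y) ⬝ᵥ (z - y) = 0
    · have hhyp := dotProduct_sub_self_of_dotProduct_eq_zero hxy
      rw [sub_sub_sub_cancel_left, hx, hy, add_zero] at hhyp
      refine mem_union_right _ ?_
      simp only [isotropicTriangles, isotropicPairs, mem_filter, mem_product]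
      exact ⟨⟨hxA, hyA, hzA⟩, ⟨⟨hxA, hyA⟩, hhyp⟩, ⟨⟨hyA, hzA⟩, hy⟩, ⟨hxA, hzA⟩, hx⟩
    · refine mem_union_left _ (mem_union_right _ (mem_image.2 ⟨(y, x, z), ?_, rfl⟩))
      simp only [anisotropicRightAngles, rightAngles, mem_filter, mem_product]
      exact ⟨⟨⟨hyA, hxA, hzA⟩, hyx⟩, hy⟩
  · exact mem_union_left _ (mem_union_left _ (mem_filter.2 ⟨ht, hx⟩))

lemma card_rightAngles_le_add (A : Finset (ι → F)) :
    #(rightAngles A) ≤ 2 * #(anisotropicRightAngles A) + #(isotropicTriangles A) := by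
  calc #(rightAngles A) ≤ _ := card_le_card (rightAngles_subset A)
    _ ≤ #(anisotropicRightAngles A) + #(anisotropicRightAngles A) + #(isotropicTriangles A) :=
        (card_union_le _ _).trans <|
          add_le_add_left ((card_union_le _ _).trans (add_le_add_right card_image_le _)) _
    _ = 2 * #(anisotropicRightAngles A) + #(isotropicTriangles A) := by rw [two_mul]

lemma sq_card_isotropicTriangles_le (A : Finset (ι → F)) :
    #(isotropicTriangles A) ^ 2 ≤ #(isotropicPairs A) ^ 3 := by
  let e (x y : ι → F) : ℝ := if (x, y) ∈ isotropicPairs A then 1 else 0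
  have hsub : isotropicPairs A ⊆ A ×ˢ A := filter_subset _ _
  have hpairs : (#(isotropicPairs A) : ℝ) = ∑ x ∈ A, ∑ y ∈ A, e x y ^ 2 := by
    simp only [e, ite_pow, one_pow, zero_pow two_ne_zero]
    rw [← sum_product' A A fun x y => if (x, y) ∈ isotropicPairs A then (1 : ℝ) else 0, sum_boole,
      filter_mem_eq_inter, inter_eq_right.2 hsub]
  have htriangles :
      (#(isotropicTriangles A) : ℝ) = ∑ x ∈ A, ∑ y ∈ A, ∑ z ∈ A, e x y * e y z * e x z := by
    rw [isotropicTriangles, card_filter, sum_product]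
    simp only [sum_product, Nat.cast_sum]
    refine sum_congr rfl fun x _ => sum_congr rfl fun y _ => sum_congr rfl fun z _ => ?_
    simp only [e, ite_and, ite_mul, one_mul, zero_mul, Nat.cast_ite, Nat.cast_one, Nat.cast_zero]
  have h := sq_sum_mul_mul_le A A A e e e
  rw [← htriangles, ← hpairs, ← pow_three'] at h
  exact_mod_cast h

variable [Fintype F]

lemma inv_mul_sq_add_pow_mul_cube_le {q a : ℝ} {k : ℕ} (hq : 1 ≤ q) (ha : q ^ k ≤ a) :
    (q⁻¹ * a ^ 2 + q ^ k * a) ^ 3 ≤ (2 * (q⁻¹ * a ^ 3 + √(q ^ k * a ^ 5))) ^ 2 := by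
  have hq0 : 0 ≤ q := zero_le_one.trans hq
  have ha0 : 0 ≤ a := (pow_nonneg hq0 k).trans ha
  calc (q⁻¹ * a ^ 2 + q ^ k * a) ^ 3 ≤ 4 * ((q⁻¹ * a ^ 2) ^ 3 + (q ^ k * a) ^ 3) :=
        (add_pow_le (by positivity) (by positivity) 3).trans_eq (by norm_num)
    _ = 4 * (q⁻¹ * (q⁻¹ * a ^ 3) ^ 2 + q ^ k * (q ^ k) ^ 2 * a ^ 3) := by ring
    _ ≤ 4 * (1 * (q⁻¹ * a ^ 3) ^ 2 + q ^ k * a ^ 2 * a ^ 3) := by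
        gcongr
        exact inv_le_one_of_one_le₀ hq
    _ = 4 * ((q⁻¹ * a ^ 3) ^ 2 + √(q ^ k * a ^ 5) ^ 2) := by
        rw [Real.sq_sqrt (by positivity)]
        ring
    _ ≤ 4 * (q⁻¹ * a ^ 3 + √(q ^ k * a ^ 5)) ^ 2 := by
        gcongr
        exact pow_add_pow_le (by positivity) (by positivity) two_ne_zero
    _ = _ := by ring

lemma card_isotropicTriangles_le (hF : ringChar F ≠ 2) {k : ℕ}
    (hι : Fintype.card ι = 2 * k + 1) (A : Finset (ι → F)) :
    (#(isotropicTriangles A) : ℝ) ≤ 2 * ((Fintype.card F : ℝ)⁻¹ * (#A : ℝ) ^ 3 +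
      √((Fintype.card F : ℝ) ^ k * (#A : ℝ) ^ 5) + (Fintype.card F : ℝ) ^ k * (#A : ℝ) ^ 2) := by
  have htriangles : (#(isotropicTriangles A) : ℝ) ^ 2 ≤ (#(isotropicPairs A) : ℝ) ^ 3 :=
    mod_cast sq_card_isotropicTriangles_le A
  have hcube : (#(isotropicTriangles A) : ℝ) ≤ (#A : ℝ) ^ 3 :=
    mod_cast card_isotropicTriangles_le_cube A
  have hpairs := card_isotropicPairs_le hF hι A
  have hq : (1 : ℝ) ≤ Fintype.card F := mod_cast Fintype.card_pos
  set q := (Fintype.card F : ℝ)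
  set a := (#A : ℝ)
  have ha : 0 ≤ a := Nat.cast_nonneg _
  have hmain : 0 ≤ q⁻¹ * a ^ 3 + √(q ^ k * a ^ 5) := by positivity
  have hrest : 0 ≤ q ^ k * a ^ 2 := by positivity
  obtain hsmall | hlarge := le_total a (q ^ k)
  · calc (#(isotropicTriangles A) : ℝ) ≤ a * a ^ 2 := by linarith
      _ ≤ q ^ k * a ^ 2 := by gcongr
      _ ≤ _ := by linarith
  · have hsq : (#(isotropicTriangles A) : ℝ) ^ 2 ≤
        (2 * (q⁻¹ * a ^ 3 + √(q ^ k * a ^ 5))) ^ 2 := by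
      calc (#(isotropicTriangles A) : ℝ) ^ 2 ≤ (q⁻¹ * a ^ 2 + q ^ k * a) ^ 3 := by
            refine htriangles.trans ?_
            gcongr
        _ ≤ _ := inv_mul_sq_add_pow_mul_cube_le hq hlarge
    linarith [le_of_sq_le_sq hsq (by positivity)]

lemma card_incidences_perpHyperplane_le [DecidableEq ι] {k : ℕ} (hι : Fintype.card ι = 2 * k + 1)
    (A : Finset (ι → F)) (x : ι → F) :
    (#(incidences (perpHyperplane x) A {z ∈ A | (z - x) ⬝ᵥ (z - x) ≠ 0}) : ℝ) ≤
      (Fintype.card F : ℝ)⁻¹ * (#A : ℝ) ^ 2 + (Fintype.card F : ℝ) ^ k * #A := by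
  set Z : Finset (ι → F) := {z ∈ A | (z - x) ⬝ᵥ (z - x) ≠ 0}
  have hZ (z) (hz : z ∈ Z) : (z - x) ⬝ᵥ (z - x) ≠ 0 := (mem_filter.1 hz).2
  have hZA : (#Z : ℝ) ≤ #A := mod_cast card_filter_le _ _
  have hspace : (Fintype.card (ι → F) : ℝ) = (Fintype.card F : ℝ) ^ (2 * k + 1) := by
    rw [Fintype.card_fun, hι, Nat.cast_pow]
  have hmoment := sq_mul_card_incidences_sub_le (q := Fintype.card F) (H := perpHyperplane x)
    (Z := Z)
    (fun z hz => by
      rw [mul_comm, Fintype.card_fun]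
      exact_mod_cast card_perpHyperplane_mul_card fun h =>
        hZ z hz (by rw [h, sub_self, zero_dotProduct]))
    (fun z hz z' hz' hne => by
      rw [Fintype.card_fun]
      exact_mod_cast sq_card_mul_card_perpHyperplane_inter_le hne (hZ z hz) (hZ z' hz')) A
  rw [hspace] at hmoment
  set q := (Fintype.card F : ℝ)
  set a := (#A : ℝ)
  have hq : 0 < q := Nat.cast_pos.2 Fintype.card_pos
  have hdev : q * #(incidences (perpHyperplane x) A Z) - a * #Z ≤ q ^ (k + 1) * a := by
    refine le_of_sq_le_sq (hmoment.trans ?_) (by positivity)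
    calc q * q ^ (2 * k + 1) * a * #Z ≤ q * q ^ (2 * k + 1) * a * a := by gcongr
      _ = (q ^ (k + 1) * a) ^ 2 := by ring
  rw [inv_mul_eq_div, div_add' _ _ _ hq.ne', le_div_iff₀ hq]
  have hmul : a * #Z ≤ a * a := by gcongr
  rw [pow_succ q k] at hdev
  linarith

lemma card_anisotropicRightAngles_le {k : ℕ} (hι : Fintype.card ι = 2 * k + 1)
    (A : Finset (ι → F)) :
    (#(anisotropicRightAngles A) : ℝ) ≤
      (Fintype.card F : ℝ)⁻¹ * (#A : ℝ) ^ 3 + (Fintype.card F : ℝ) ^ k * (#A : ℝ) ^ 2 := by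
  classical
  have hle : #(anisotropicRightAngles A) ≤ #(A.sigma fun x =>
      incidences (perpHyperplane x) A {z ∈ A | (z - x) ⬝ᵥ (z - x) ≠ 0}) := by
    refine card_le_card_of_injOn (Equiv.sigmaEquivProd _ _).symm ?_ (Equiv.injective _).injOn
    rintro ⟨_, _, _⟩ ht
    simp only [anisotropicRightAngles, rightAngles, mem_coe, mem_filter, mem_product] at ht
    obtain ⟨⟨⟨hx, hy, hz⟩, hangle⟩, hleg⟩ := ht
    simp only [Equiv.sigmaEquivProd_symm_apply, incidences, perpHyperplane, mem_coe, mem_sigma,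
      mem_filter, mem_univ, true_and, mem_product]
    exact ⟨hx, ⟨hy, hz, hleg⟩, hangle⟩
  calc (#(anisotropicRightAngles A) : ℝ)
      ≤ ∑ x ∈ A, (#(incidences (perpHyperplane x) A {z ∈ A | (z - x) ⬝ᵥ (z - x) ≠ 0}) : ℝ) := by
        rw [card_sigma] at hle
        exact_mod_cast hle
    _ ≤ ∑ _x ∈ A, ((Fintype.card F : ℝ)⁻¹ * (#A : ℝ) ^ 2 + (Fintype.card F : ℝ) ^ k * #A) :=
        sum_le_sum fun _ _ => card_incidences_perpHyperplane_le hι A _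
    _ = _ := by
        rw [sum_const, nsmul_eq_mul]
        ring

lemma card_rightAngles_le (hF : ringChar F ≠ 2) {k : ℕ} (hι : Fintype.card ι = 2 * k + 1)
    (A : Finset (ι → F)) :
    (#(rightAngles A) : ℝ) ≤ 4 * ((Fintype.card F : ℝ)⁻¹ * (#A : ℝ) ^ 3 +
      √((Fintype.card F : ℝ) ^ k * (#A : ℝ) ^ 5) + (Fintype.card F : ℝ) ^ k * (#A : ℝ) ^ 2) := by
  have hsplit : (#(rightAngles A) : ℝ) ≤
      2 * #(anisotropicRightAngles A) + #(isotropicTriangles A) :=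
    mod_cast card_rightAngles_le_add A
  linarith [card_anisotropicRightAngles_le hι A, card_isotropicTriangles_le hF hι A,
    Real.sqrt_nonneg ((Fintype.card F : ℝ) ^ k * (#A : ℝ) ^ 5)]

end RightAngles

section Paraboloid

variable {F : Type} [Field F] [Fintype F] [DecidableEq F] {d : ℕ}
  {E : Finset ((Fin (d - 1) → F) × F)}

lemma snd_eq_dotProduct_of_mem_parab {x : (Fin (d - 1) → F) × F} (hx : x ∈ parab F d) :
    x.2 = x.1 ⬝ᵥ x.1 :=
  (mem_filter.1 hx).2

lemma injOn_fst_of_subset_parab (hE : E ⊆ parab F d) :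
    Set.InjOn Prod.fst (E : Set ((Fin (d - 1) → F) × F)) := by
  intro x hx y hy hxy
  refine Prod.ext hxy ?_
  rw [snd_eq_dotProduct_of_mem_parab (hE hx), snd_eq_dotProduct_of_mem_parab (hE hy), hxy]

lemma dotProduct_sub_sub_eq_zero_of_add_eq_add (hF : ringChar F ≠ 2)
    {x y z w : (Fin (d - 1) → F) × F} (hx : x ∈ parab F d) (hy : y ∈ parab F d)
    (hz : z ∈ parab F d) (hw : w ∈ parab F d) (h : x + y = z + w) :
    (z.1 - x.1) ⬝ᵥ (z.1 - y.1) = 0 := by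
  have hfst : w.1 = x.1 + y.1 - z.1 := eq_sub_of_add_eq' (congrArg Prod.fst h).symm
  have hsnd : x.2 + y.2 = z.2 + w.2 := congrArg Prod.snd h
  rw [snd_eq_dotProduct_of_mem_parab hx, snd_eq_dotProduct_of_mem_parab hy,
    snd_eq_dotProduct_of_mem_parab hz, snd_eq_dotProduct_of_mem_parab hw, hfst] at hsnd
  have hdouble : 2 * ((z.1 - x.1) ⬝ᵥ (z.1 - y.1)) = 0 := by
    simp only [dotProduct_add, add_dotProduct, dotProduct_sub, sub_dotProduct,
      dotProduct_comm y.1 x.1, dotProduct_comm z.1 x.1, dotProduct_comm z.1 y.1] at hsnd ⊢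
    linear_combination -hsnd
  exact (mul_eq_zero.1 hdouble).resolve_left (Ring.two_ne_zero hF)

lemma lambda4_le_card_rightAngles (hF : ringChar F ≠ 2) (hE : E ⊆ parab F d) :
    lambda4 E ≤ #(rightAngles (E.image Prod.fst)) := by
  have hinj := injOn_fst_of_subset_parab hE
  refine card_le_card_of_injOn (fun t => (t.1.1, t.2.1.1, t.2.2.1.1)) ?_ ?_
  · rintro ⟨x, y, z, w⟩ ht
    simp only [mem_coe, mem_filter, mem_product] at ht
    obtain ⟨⟨hx, hy, hz, hw⟩, hsum⟩ := ht
    refine mem_filter.2 ⟨?_, dotProduct_sub_sub_eq_zero_of_add_eq_add hF (hE hx) (hE hy) (hE hz)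
      (hE hw) hsum⟩
    simp only [mem_product]
    exact ⟨mem_image_of_mem _ hx, mem_image_of_mem _ hy, mem_image_of_mem _ hz⟩
  · rintro ⟨x, y, z, w⟩ ht ⟨x', y', z', w'⟩ ht' hproj
    simp only [mem_coe, mem_filter, mem_product] at ht ht'
    obtain ⟨⟨hx, hy, hz, -⟩, hsum⟩ := ht
    obtain ⟨⟨hx', hy', hz', -⟩, hsum'⟩ := ht'
    simp only [Prod.mk.injEq] at hproj
    obtain rfl := hinj hx hx' hproj.1
    obtain rfl := hinj hy hy' hproj.2.1
    obtain rfl := hinj hz hz' hproj.2.2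
    rw [add_left_cancel (hsum.symm.trans hsum')]

end Paraboloid

lemma sqrt_pow_mul_pow_eq_rpow {q a : ℝ} (hq : 0 ≤ q) (ha : 0 ≤ a) (m n : ℕ) :
    √(q ^ m * a ^ n) = q ^ ((m : ℝ) / 2) * a ^ ((n : ℝ) / 2) := by
  rw [Real.sqrt_mul (pow_nonneg hq m), Real.sqrt_eq_rpow, Real.sqrt_eq_rpow, ← Real.rpow_natCast,
    ← Real.rpow_natCast, ← Real.rpow_mul hq, ← Real.rpow_mul ha, mul_one_div, mul_one_div]

theorem additive_quadruples_min_bound_general {F : Type} [Field F] [Fintype F] [DecidableEq F]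
    (hF : ringChar F ≠ 2) {d : ℕ} (hd : 2 ≤ d) (hdeven : Even d)
    {E : Finset ((Fin (d - 1) → F) × F)} (hE : E ⊆ parab F d) :
    (lambda4 E : ℝ) ≤
      4 * min ((E.card : ℝ) ^ 3)
        ((Fintype.card F : ℝ)⁻¹ * (E.card : ℝ) ^ 3 +
          (Fintype.card F : ℝ) ^ (((d : ℝ) - 2) / 4) * (E.card : ℝ) ^ ((5 : ℝ) / 2) +
          (Fintype.card F : ℝ) ^ (((d : ℝ) - 2) / 2) * (E.card : ℝ) ^ 2) := by
  obtain ⟨k, rfl⟩ : ∃ k, d = 2 * k + 2 := by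
    obtain ⟨m, rfl⟩ := hdeven
    exact ⟨m - 1, by omega⟩
  have hcard : #(E.image Prod.fst) = #E := card_image_of_injOn (injOn_fst_of_subset_parab hE)
  have hangles : (lambda4 E : ℝ) ≤ #(rightAngles (E.image Prod.fst)) :=
    mod_cast lambda4_le_card_rightAngles hF hE
  have hcube : (#(rightAngles (E.image Prod.fst)) : ℝ) ≤ (#E : ℝ) ^ 3 :=
    mod_cast hcard ▸ card_rightAngles_le_cube (E.image Prod.fst)
  have hdim : Fintype.card (Fin (2 * k + 2 - 1)) = 2 * k + 1 := Fintype.card_fin _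
  have hbound := card_rightAngles_le hF hdim (E.image Prod.fst)
  rw [hcard, sqrt_pow_mul_pow_eq_rpow (Nat.cast_nonneg _) (Nat.cast_nonneg _),
    Nat.cast_ofNat] at hbound
  have hquarter : (((2 * k + 2 : ℕ) : ℝ) - 2) / 4 = (k : ℝ) / 2 := by push_cast; ring
  have hhalf : (((2 * k + 2 : ℕ) : ℝ) - 2) / 2 = k := by push_cast; ring
  rw [hquarter, hhalf, Real.rpow_natCast, mul_min_of_nonneg _ _ (by norm_num)]
  refine le_min ?_ (hangles.trans hbound)
  linarith [pow_nonneg (Nat.cast_nonneg (α := ℝ) #E) 3]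

/-- For even `d ≥ 4`,
`Λ₄(E) ≲ min { |E|³, q⁻¹|E|³ + q^{(d-2)/4}|E|^{5/2} + q^{(d-2)/2}|E|² }`. -/
theorem additive_quadruples_min_bound (d : ℕ) (hd4 : 4 ≤ d) (hdeven : Even d) :
    ∃ C : ℝ, 0 < C ∧
      ∀ (F : Type) [Field F] [Fintype F] [DecidableEq F], 2 < ringChar F →
        ∀ E : Finset ((Fin (d - 1) → F) × F), E ⊆ parab F d →
          (lambda4 E : ℝ) ≤
            C * min ((E.card : ℝ) ^ 3)
              ((Fintype.card F : ℝ)⁻¹ * (E.card : ℝ) ^ 3 +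
                (Fintype.card F : ℝ) ^ (((d : ℝ) - 2) / 4) * (E.card : ℝ) ^ ((5 : ℝ) / 2) +
                (Fintype.card F : ℝ) ^ (((d : ℝ) - 2) / 2) * (E.card : ℝ) ^ 2) :=
  ⟨4, by norm_num, fun _ _ _ _ hF _ hE =>
    additive_quadruples_min_bound_general hF.ne' (by omega) hdeven hE⟩
end
end

section
/- Let d ≥ 4 be even and let F_q be a finite field with q elements of characteristic greater than two in which −1 is a square, say i² = −1 for some i ∈ F_q. Then the set H = { (s₁, i s₁, …, s_k, i s_k, …, s_{(d−2)/2}, i s_{(d−2)/2}, 0, 0) : s_k ∈ F_q, k = 1, …, (d−2)/2 } is an F_q-linear subspace of F_q^d of dimension (d−2)/2 (so |H| = q^{(d−2)/2}) which is contained in the paraboloid S. -/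
open Finset

noncomputable section

/-- The set `H = {(s₁, i s₁, …, s_{(d-2)/2}, i s_{(d-2)/2}, 0, 0)}` in
`F^d = F^{d-1} × F` (for even `d`): the last component and the last coordinate of the
first component vanish, and each odd-indexed coordinate is `i` times the preceding one. -/
def evenSubset (F : Type) [CommRing F] (d : ℕ) (i : F) : Set ((Fin (d - 1) → F) × F) :=
  {x | x.2 = 0 ∧ (∀ j : Fin (d - 1), (j : ℕ) = d - 2 → x.1 j = 0) ∧
    ∀ j : Fin (d - 1), Odd (j : ℕ) →
      x.1 j = i * x.1 ⟨(j : ℕ) - 1, lt_of_le_of_lt (Nat.sub_le _ _) j.isLt⟩}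

section Parametrization

variable {R : Type*} [CommSemiring R] {m : ℕ}

/-- The parametrization `(s₁, …, s_m) ↦ (s₁, i s₁, …, s_m, i s_m, 0)` of the first component of
`evenSubset`: with indices from `0`, the coordinate `2k + b` for `b ∈ {0, 1}` is `i ^ b * s k`. -/
def evenParam (i : R) (m : ℕ) : (Fin m → R) →ₗ[R] (Fin (m * 2 + 1) → R) where
  toFun s := Fin.snoc (α := fun _ => R) (fun j => i ^ (j.modNat : ℕ) * s j.divNat) 0
  map_add' s t := by
    ext j
    cases j using Fin.lastCases <;> simp [mul_add]
  map_smul' c s := by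
    ext j
    cases j using Fin.lastCases <;> simp [mul_left_comm]

@[simp]
theorem evenParam_last (i : R) (s : Fin m → R) : evenParam i m s (Fin.last _) = 0 := by
  simp [evenParam]

@[simp]
theorem evenParam_castSucc_finProdFinEquiv (i : R) (s : Fin m → R) (k : Fin m) (b : Fin 2) :
    evenParam i m s (finProdFinEquiv (k, b)).castSucc = i ^ (b : ℕ) * s k := by
  have h : ((finProdFinEquiv (k, b)).divNat, (finProdFinEquiv (k, b)).modNat) = (k, b) :=
    finProdFinEquiv.symm_apply_apply (k, b)
  rw [Prod.mk.injEq] at h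
  simp [evenParam, h.1, Nat.mod_eq_of_lt b.isLt]

theorem evenParam_injective (i : R) (m : ℕ) : Function.Injective (evenParam i m) := by
  intro s t hst
  ext k
  simpa using congrFun hst (finProdFinEquiv (k, 0)).castSucc

theorem mem_range_evenParam {i : R} {x : Fin (m * 2 + 1) → R} :
    x ∈ LinearMap.range (evenParam i m) ↔ x (Fin.last _) = 0 ∧
      ∀ k, x (finProdFinEquiv (k, 1)).castSucc = i * x (finProdFinEquiv (k, 0)).castSucc := by
  constructor
  · rintro ⟨s, rfl⟩
    simp
  · rintro ⟨hlast, hpair⟩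
    refine ⟨fun k => x (finProdFinEquiv (k, 0)).castSucc, ?_⟩
    ext j
    cases j using Fin.lastCases with
    | last => simp [hlast]
    | cast j =>
      obtain ⟨⟨k, b⟩, rfl⟩ := finProdFinEquiv.surjective j
      fin_cases b <;> simp [hpair]

end Parametrization

section Paraboloid

variable {F : Type} [CommRing F] {m : ℕ}

theorem dotp_evenParam (i : F) (s t : Fin m → F) :
    dotp (evenParam i m s) (evenParam i m t) = (1 + i ^ 2) * dotp s t := by
  calc dotp (evenParam i m s) (evenParam i m t)
      = ∑ k, ∑ b : Fin 2, i ^ (b : ℕ) * s k * (i ^ (b : ℕ) * t k) := by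
        rw [dotp, Fin.sum_univ_castSucc, ← finProdFinEquiv.sum_comp, Fintype.sum_prod_type]
        simp only [evenParam_castSucc_finProdFinEquiv, evenParam_last, mul_zero, add_zero]
    _ = ∑ k, (1 + i ^ 2) * (s k * t k) := by
        refine sum_congr rfl fun k _ => ?_
        rw [Fin.sum_univ_two, Fin.val_zero, Fin.val_one]
        ring
    _ = (1 + i ^ 2) * dotp s t := by rw [dotp, mul_sum]

theorem mem_evenSubset {i : F} {x : (Fin (m * 2 + 1) → F) × F} :
    x ∈ evenSubset F (m * 2 + 2) i ↔ x.2 = 0 ∧ x.1 ∈ LinearMap.range (evenParam i m) := by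
  rw [mem_range_evenParam]
  refine and_congr_right fun _ => and_congr ?_ ?_
  · exact ⟨fun h => h _ rfl, fun h j hj => (Fin.ext hj : j = Fin.last _) ▸ h⟩
  · constructor
    · intro h k
      convert h (finProdFinEquiv (k, 1)).castSucc ⟨k, by simp [add_comm]⟩ using 3
      simp [Fin.ext_iff]
    · rintro h ⟨_, hj⟩ ⟨k, rfl⟩
      convert h ⟨k, by lia⟩ using 3 <;> simp [Fin.ext_iff, add_comm]

theorem coe_range_inl_comp_evenParam (i : F) (m : ℕ) :
    (LinearMap.range (LinearMap.inl F _ F ∘ₗ evenParam i m) :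
      Set ((Fin (m * 2 + 1) → F) × F)) = evenSubset F (m * 2 + 2) i := by
  ext ⟨x, y⟩
  rw [mem_evenSubset]
  simp [eq_comm, and_comm]

theorem evenSubset_subset_paraboloid {i : F} (hi : i ^ 2 = -1) (m : ℕ) :
    evenSubset F (m * 2 + 2) i ⊆ {x | x.2 = dotp x.1 x.1} := by
  intro x hx
  obtain ⟨hx₂, s, hs⟩ := mem_evenSubset.mp hx
  calc x.2 = (1 + i ^ 2) * dotp s s := by rw [hx₂, hi, add_neg_cancel, zero_mul]
    _ = dotp x.1 x.1 := by rw [← dotp_evenParam, hs]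

end Paraboloid

/-- The linear equivalence encodes both the dimension and the cardinality: over an infinite ring
`Nat.card` would only give the junk value `0`. -/
theorem even_subspace_in_paraboloid_general {d : ℕ} (hd : 2 ≤ d) (hdeven : Even d)
    {F : Type} [CommRing F] {i : F} (hi : i ^ 2 = -1) :
    ∃ W : Submodule F ((Fin (d - 1) → F) × F),
      (W : Set ((Fin (d - 1) → F) × F)) = evenSubset F d i ∧
      Nonempty (W ≃ₗ[F] (Fin ((d - 2) / 2) → F)) ∧
      evenSubset F d i ⊆ {x : (Fin (d - 1) → F) × F | x.2 = dotp x.1 x.1} := by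
  obtain ⟨m, rfl⟩ : ∃ m, d = m * 2 + 2 := ⟨(d - 2) / 2, by grind⟩
  have hinj : Function.Injective (LinearMap.inl F (Fin (m * 2 + 1) → F) F ∘ₗ evenParam i m) :=
    LinearMap.inl_injective.comp (evenParam_injective i m)
  rw [show (m * 2 + 2 - 2) / 2 = m by lia]
  exact ⟨_, coe_range_inl_comp_evenParam i m, ⟨(LinearEquiv.ofInjective _ hinj).symm⟩,
    evenSubset_subset_paraboloid hi m⟩

/-- For even `d ≥ 4` and `i² = -1` in `F`, the set `H` is an
`F`-linear subspace of `F^d` of dimension `(d-2)/2` (so `|H| = q^{(d-2)/2}`)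
contained in the paraboloid `S`. -/
theorem even_subspace_in_paraboloid (d : ℕ) (hd4 : 4 ≤ d) (hdeven : Even d)
    (F : Type) [Field F] [Fintype F] [DecidableEq F] (hchar : 2 < ringChar F)
    (i : F) (hi : i ^ 2 = -1) :
    ∃ W : Submodule F ((Fin (d - 1) → F) × F),
      (W : Set ((Fin (d - 1) → F) × F)) = evenSubset F d i ∧
      Module.finrank F W = (d - 2) / 2 ∧
      Nat.card (evenSubset F d i) = Fintype.card F ^ ((d - 2) / 2) ∧
      evenSubset F d i ⊆ {x : (Fin (d - 1) → F) × F | x.2 = dotp x.1 x.1} := by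
  obtain ⟨W, hW, ⟨e⟩, hS⟩ := even_subspace_in_paraboloid_general (by lia) hdeven hi
  exact ⟨W, hW, by simp [e.finrank_eq], by simp [← hW, Nat.card_congr e.toEquiv], hS⟩
end
end

section
/- Let d ≥ 3 be odd and let F_q be a finite field with q elements of characteristic greater than two in which −1 is a square, say i² = −1 for some i ∈ F_q. Then the set H = { (s₁, i s₁, …, s_k, i s_k, …, s_{(d−1)/2}, i s_{(d−1)/2}, 0) : s_k ∈ F_q, k = 1, …, (d−1)/2 } is an F_q-linear subspace of F_q^d of dimension (d−1)/2 (so |H| = q^{(d−1)/2}) which is contained in the paraboloid S. -/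
open Finset

noncomputable section

/-- The set `H = {(s₁, i s₁, …, s_{(d-1)/2}, i s_{(d-1)/2}, 0)}` in
`F^d = F^{d-1} × F` (for odd `d`): the last component vanishes, and each
odd-indexed coordinate of the first component is `i` times the preceding one. -/
def oddSubset (F : Type) [CommRing F] (d : ℕ) (i : F) : Set ((Fin (d - 1) → F) × F) :=
  {x | x.2 = 0 ∧
    ∀ j : Fin (d - 1), Odd (j : ℕ) →
      x.1 j = i * x.1 ⟨(j : ℕ) - 1, lt_of_le_of_lt (Nat.sub_le _ _) j.isLt⟩}

theorem sum_fin_two_mul {M : Type*} [AddCommMonoid M] (m : ℕ) (f : Fin (2 * m) → M) :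
    ∑ j, f j = ∑ k : Fin m, (f ⟨2 * k, by omega⟩ + f ⟨2 * k + 1, by omega⟩) := by
  let e : Fin m × Fin 2 ≃ Fin (2 * m) := finProdFinEquiv.trans (finCongr (mul_comm m 2))
  rw [← e.sum_comp, Fintype.sum_prod_type]
  refine sum_congr rfl fun k _ => (Fin.sum_univ_two _).trans ?_
  congr 2 <;> ext <;> simp [e, add_comm]

section

variable {R : Type} [CommRing R]

/-- The parametrization `s ↦ (s₀, i s₀, s₁, i s₁, …, 0)` of `oddSubset R d i`. For even `d`
the last pair is cut to its first entry. -/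
def oddParametrization (d : ℕ) (i : R) : (Fin (d / 2) → R) →ₗ[R] (Fin (d - 1) → R) × R :=
  LinearMap.inl R (Fin (d - 1) → R) R ∘ₗ
    LinearMap.pi fun j => i ^ ((j : ℕ) % 2) • LinearMap.proj ⟨(j : ℕ) / 2, by omega⟩

theorem oddParametrization_apply_two_mul (d : ℕ) (i : R) (s : Fin (d / 2) → R) (k : Fin (d / 2)) :
    (oddParametrization d i s).1 ⟨2 * k, by omega⟩ = s k := by
  simp [oddParametrization]

theorem oddParametrization_injective (d : ℕ) (i : R) :
    Function.Injective (oddParametrization d i) := fun s t h => funext fun k => by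
  rw [← oddParametrization_apply_two_mul d i s k, h, oddParametrization_apply_two_mul]

theorem oddParametrization_mem_oddSubset (d : ℕ) (i : R) (s : Fin (d / 2) → R) :
    oddParametrization d i s ∈ oddSubset R d i := by
  refine ⟨rfl, fun ⟨j, hj⟩ ⟨k, hk⟩ => ?_⟩
  subst hk
  have hdiv : (2 * k + 1) / 2 = k := by omega
  simp [oddParametrization, hdiv, Nat.add_mod]

theorem oddParametrization_evenCoords {d : ℕ} {i : R} {x : (Fin (d - 1) → R) × R}
    (hx : x ∈ oddSubset R d i) :
    oddParametrization d i (fun k => x.1 ⟨2 * k, by omega⟩) = x := by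
  obtain ⟨hlast, hodd⟩ := hx
  refine Prod.ext (funext fun ⟨j, hj⟩ => ?_) hlast.symm
  obtain ⟨k, rfl | rfl⟩ := j.even_or_odd'
  · simp [oddParametrization]
  · have hdiv : (2 * k + 1) / 2 = k := by omega
    simp [oddParametrization, hodd ⟨2 * k + 1, hj⟩ ⟨k, rfl⟩, hdiv, Nat.add_mod]

theorem range_oddParametrization (d : ℕ) (i : R) :
    Set.range (oddParametrization d i) = oddSubset R d i :=
  Set.Subset.antisymm (Set.range_subset_iff.mpr (oddParametrization_mem_oddSubset d i))
    fun _ hx => ⟨_, oddParametrization_evenCoords hx⟩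

theorem mk_oddSubset (d : ℕ) (i : R) :
    Cardinal.mk (oddSubset R d i) = Cardinal.mk R ^ (d / 2) := by
  rw [← range_oddParametrization, Cardinal.mk_range_eq _ (oddParametrization_injective d i)]
  simp

theorem dotp_eq_zero_of_mem_oddSubset {d : ℕ} (hd : Odd d) {i : R} (hi : i ^ 2 = -1)
    {x y : (Fin (d - 1) → R) × R} (hx : x ∈ oddSubset R d i) (hy : y ∈ oddSubset R d i) :
    dotp x.1 y.1 = 0 := by
  obtain ⟨m, rfl⟩ := hd
  refine (sum_fin_two_mul m fun j => x.1 j * y.1 j).trans (sum_eq_zero fun k _ => ?_)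
  have hxk := hx.2 ⟨2 * k + 1, by omega⟩ ⟨k, rfl⟩
  have hyk := hy.2 ⟨2 * k + 1, by omega⟩ ⟨k, rfl⟩
  simp only [Nat.add_sub_cancel] at hxk hyk
  rw [hxk, hyk]
  linear_combination x.1 ⟨2 * k, by omega⟩ * y.1 ⟨2 * k, by omega⟩ * hi

end

/-- Stated with `Cardinal.mk`, since `Nat.card` is `0` on infinite types and would say nothing about
`|H|` over an infinite ring. -/
theorem odd_subspace_in_paraboloid_general {d : ℕ} (hd : Odd d) {R : Type} [CommRing R]
    [Nontrivial R] {i : R} (hi : i ^ 2 = -1) :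
    ∃ W : Submodule R ((Fin (d - 1) → R) × R),
      (W : Set ((Fin (d - 1) → R) × R)) = oddSubset R d i ∧
      Module.finrank R W = (d - 1) / 2 ∧
      Cardinal.mk (oddSubset R d i) = Cardinal.mk R ^ ((d - 1) / 2) ∧
      oddSubset R d i ⊆ {x : (Fin (d - 1) → R) × R | x.2 = dotp x.1 x.1} := by
  have hhalf : (d - 1) / 2 = d / 2 := by grind
  rw [hhalf]
  refine ⟨(oddParametrization d i).range, range_oddParametrization d i, ?_, mk_oddSubset d i,
    fun x hx => hx.1.trans (dotp_eq_zero_of_mem_oddSubset hd hi hx hx).symm⟩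
  rw [LinearMap.finrank_range_of_inj (oddParametrization_injective d i), Module.finrank_fin_fun]

/-- For odd `d ≥ 3` and `i² = -1` in `F`, the set `H` is an
`F`-linear subspace of `F^d` of dimension `(d-1)/2` (so `|H| = q^{(d-1)/2}`)
contained in the paraboloid `S`. -/
theorem odd_subspace_in_paraboloid (d : ℕ) (hd3 : 3 ≤ d) (hdodd : Odd d)
    (F : Type) [Field F] [Fintype F] [DecidableEq F] (hchar : 2 < ringChar F)
    (i : F) (hi : i ^ 2 = -1) :
    ∃ W : Submodule F ((Fin (d - 1) → F) × F),
      (W : Set ((Fin (d - 1) → F) × F)) = oddSubset F d i ∧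
      Module.finrank F W = (d - 1) / 2 ∧
      Nat.card (oddSubset F d i) = Fintype.card F ^ ((d - 1) / 2) ∧
      oddSubset F d i ⊆ {x : (Fin (d - 1) → F) × F | x.2 = dotp x.1 x.1} := by
  obtain ⟨W, hW, hrank, hcard, hsub⟩ := odd_subspace_in_paraboloid_general hdodd hi
  exact ⟨W, hW, hrank, by simp [Nat.card, hcard], hsub⟩
end
end
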